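/- arXiv:2306.12494 — 2 statements merged into one kernel-verified Lean document; each statement's English description precedes it below -/
import Mathlib

section
/- Let K ⊆ ℝ² be a compact convex set with nonempty interior whose boundary ∂K is a C² curve of strictly positive curvature, let T be its outer billiard map, fix the origin 0 in the interior of K, and let r : ℝ → ℝ be the (C², 2π-periodic, positive) radial function of ∂K, so that ∂K = {r(φ)(cos φ, sin φ) : φ ∈ ℝ} and χ := r² + 2r′² − r r″ > 0. If every T-orbit is locally minimizing (with respect to the generating function S for this origin), then ∫₀^{2π} √(χ(φ))/r(φ) dφ ≥ 2π. -/
/-!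
The proof averages the second variation of the action over all orbits.

Parametrize `∂K` by `γ(s) = r(s) (cos s, sin s)`, put `b = -r'/r` and `P = 1 + b² + b'`, so that
`P = (r² + 2 r'² - r r'') / r²`. Each point outside `K` is uniquely `γ(s) - t γ'(s)` with `t > 0` and
`s` modulo `2π`, and the outer billiard map sends it to `γ(s) + t γ'(s)`. Both coordinate systems have
the Jacobian `t r² P`, so the map preserves area.

*Second variation.* The midpoint of the segment defining `S` lies in `K`, hence below every tangent
line, so by the arithmetic-geometric mean inequality every tangent line cuts from the sector a
triangle of area at least `S` (`S_le`), with equality for the bisected tangent segment (`S_eq`).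
Turning the two rays, and letting the tangent line roll at a constant speed chosen optimally, gives
an upper bound for `S` with a second derivative which is an explicit quadratic form `qform` in the
angular variations (`second_var`). The sum of these forms along a locally minimizing orbit is
nonnegative, for all variations vanishing outside finitely many vertices (`orbit_ineq`).

*Averaging.* Take a variation `f(A)` depending only on the vertex, and integrate this inequality over
the initial vertex. By area preservation all inner terms have the same integral, and the two end
terms have integrals independent of the length of the orbit segment, so the common integral is
nonnegative (`integral_nonneg_of_locMin`).

*The variation.* The choice `f(A) = |A|⁻²` makes everything explicit, but its end terms are not
integrable. It is therefore damped, `f(A) = |A|⁻² / (1 + e |A|²)`. The integrand is dominated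
uniformly in `e` by a multiple of `1 / (1 + t²)` (`abs_dens_le`), and `e → 0` gives the nonnegativity
of the integral of
`P (2 / (1 + P t²) - (1 - b t) / (t² + (1 - b t)²) - (1 + b t) / (t² + (1 + b t)²))`
over `0 ≤ s < 2π`, `t > 0`. The integral over `t` is `π √P - π P / (1 + b²)` (`integral_dens_zero`).
Finally `P / (1 + b²)` is the derivative of `s + arctan b(s)`, so its integral over a period is `2π`,
and the claim follows because `√P = √χ / r`.
-/

open Real MeasureTheory Set

noncomputable section

/-- Determinant of two plane vectors. -/
def detV (u v : ℝ × ℝ) : ℝ := u.1 * v.2 - u.2 * v.1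

/-- The unit vector of polar angle `φ`. -/
def uVec (φ : ℝ) : ℝ × ℝ := (Real.cos φ, Real.sin φ)

/-- The boundary of `K` is a `C²` curve of strictly positive curvature, expressed through the
radial function `r` of `∂K` with respect to the interior point `O`. -/
def HasC2PosCurvBoundary (K : Set (ℝ × ℝ)) (O : ℝ × ℝ) (r : ℝ → ℝ) : Prop :=
  O ∈ interior K ∧ ContDiff ℝ 2 r ∧ (∀ φ, r (φ + 2 * π) = r φ) ∧ (∀ φ, 0 < r φ) ∧
  (∀ φ, 0 < r φ ^ 2 + 2 * (deriv r φ) ^ 2 - r φ * deriv (deriv r) φ) ∧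
  frontier K = {p | ∃ φ, p = O + r φ • uVec φ}

/-- `T` is the outer billiard map of `K`: for `A ∉ K`, the midpoint of `[A, T A]` lies on `∂K`,
the segment `[A, T A]` meets `K` exactly at this midpoint, and `K` lies to the left of the
oriented segment. -/
def IsOuterBilliard (K : Set (ℝ × ℝ)) (T : ℝ × ℝ → ℝ × ℝ) : Prop :=
  ∀ A, A ∉ K →
    T A ∉ K ∧
    (1 / 2 : ℝ) • (A + T A) ∈ frontier K ∧
    segment ℝ A (T A) ∩ K = {(1 / 2 : ℝ) • (A + T A)} ∧
    ∀ k ∈ K, 0 ≤ detV (T A - A) (k - (1 / 2 : ℝ) • (A + T A))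

/-- A set is an ellipse if it is the image of the unit circle under an invertible affine map. -/
def IsEllipse (C : Set (ℝ × ℝ)) : Prop :=
  ∃ (L : (ℝ × ℝ) →ₗ[ℝ] ℝ × ℝ) (c : ℝ × ℝ), Function.Bijective L ∧
    C = (fun x => c + L x) '' {x : ℝ × ℝ | x.1 ^ 2 + x.2 ^ 2 = 1}

/-- The polar dual of `C` with respect to `x`. -/
def polarDual (C : Set (ℝ × ℝ)) (x : ℝ × ℝ) : Set (ℝ × ℝ) :=
  {y | ∀ c ∈ C, y.1 * (c.1 - x.1) + y.2 * (c.2 - x.2) ≤ 1}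

/-- `x` is the Santalo point of `C`: the interior point minimizing the area of the polar dual. -/
def IsSantaloPoint (C : Set (ℝ × ℝ)) (x : ℝ × ℝ) : Prop :=
  x ∈ interior C ∧ ∀ y ∈ interior C, volume (polarDual C x) ≤ volume (polarDual C y)

/-- The data of a segment `[M₀, M₁]` with `Mᵢ` on the open ray of polar angle `φᵢ`,
tangent to `∂K` exactly at its midpoint. -/
def SegData (K : Set (ℝ × ℝ)) (φ₀ φ₁ : ℝ) (M₀ M₁ : ℝ × ℝ) : Prop :=
  (∃ s > (0 : ℝ), M₀ = s • uVec φ₀) ∧ (∃ s > (0 : ℝ), M₁ = s • uVec φ₁) ∧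
  (1 / 2 : ℝ) • (M₀ + M₁) ∈ frontier K ∧
  segment ℝ M₀ M₁ ∩ K = {(1 / 2 : ℝ) • (M₀ + M₁)}

/-- `S` is the generating function of the outer billiard of `K` (with respect to the origin `0`):
`S φ₀ φ₁` is the area of the triangle `0 M₀ M₁`. -/
def IsGenFun (K : Set (ℝ × ℝ)) (S : ℝ → ℝ → ℝ) : Prop :=
  ∀ φ₀ φ₁ : ℝ, φ₀ < φ₁ → φ₁ < φ₀ + π →
    ∃ M₀ M₁, SegData K φ₀ φ₁ M₀ M₁ ∧ S φ₀ φ₁ = |detV M₀ M₁| / 2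

/-- The angular configuration `φ : ℤ → ℝ` is locally minimizing for the generating function `S`. -/
def LocMinConfig (S : ℝ → ℝ → ℝ) (φ : ℤ → ℝ) : Prop :=
  ∀ M N : ℤ, M ≤ N →
    IsLocalMin (fun x : ℤ → ℝ =>
      S (φ (M - 1)) (x M) + (∑ i ∈ Finset.Icc M (N - 1), S (x i) (x (i + 1))) +
        S (x N) (φ (N + 1))) φ

/-- `φ` is a choice of polar angles for the sequence `A`, with consecutive angles within `(0, π)`
of each other. -/
def IsPolarLift (A : ℤ → ℝ × ℝ) (φ : ℤ → ℝ) : Prop :=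
  (∀ n, ∃ ρ > (0 : ℝ), A n = ρ • uVec (φ n)) ∧ ∀ n, φ n < φ (n + 1) ∧ φ (n + 1) < φ n + π

/-- Every orbit of the outer billiard map `T` is locally minimizing with respect to the
generating function `S`. -/
def AllOrbitsLocMin (K : Set (ℝ × ℝ)) (T : ℝ × ℝ → ℝ × ℝ) (S : ℝ → ℝ → ℝ) : Prop :=
  ∀ A : ℤ → ℝ × ℝ, (∀ n, A n ∉ K) → (∀ n, A (n + 1) = T (A n)) →
    ∀ φ : ℤ → ℝ, IsPolarLift A φ → LocMinConfig S φ

/-! ### Tangent lines of the curve and tangent coordinates -/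

/-- Radial data of a convex curve: `r` is the radial function of `∂K`, `b = -r'/r`, and
`b' = db/dφ`.  The positivity of the curvature reads `1 + b² + b' > 0`. -/
structure RadialData (K : Set (ℝ × ℝ)) (r b b' : ℝ → ℝ) : Prop where
  conv : Convex ℝ K
  comp : IsCompact K
  zero_mem : (0 : ℝ × ℝ) ∈ interior K
  frontier_eq : frontier K = {p | ∃ φ, p = r φ • uVec φ}
  hr : ∀ x, HasDerivAt r (-(b x) * r x) x
  hb : ∀ x, HasDerivAt b (b' x) x
  hb' : Continuous b'
  rper : ∀ x, r (x + 2 * π) = r x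
  bper : ∀ x, b (x + 2 * π) = b x
  b'per : ∀ x, b' (x + 2 * π) = b' x
  rpos : ∀ x, 0 < r x
  Ppos : ∀ x, 0 < 1 + b x ^ 2 + b' x

/-- The linear functional equal to `1` on the tangent line of `∂K` at polar angle `s`. -/
def nf (r b : ℝ → ℝ) (s : ℝ) (k : ℝ × ℝ) : ℝ :=
  (1 / r s) * ((cos s * k.1 + sin s * k.2) + b s * (cos s * k.2 - sin s * k.1))

/-- The point `γ(s) + t γ'(s)` of the tangent line at `γ(s) = r(s) (cos s, sin s)`. -/
def pt (r b : ℝ → ℝ) (s t : ℝ) : ℝ × ℝ :=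
  (r s * ((1 - b s * t) * cos s - t * sin s), r s * ((1 - b s * t) * sin s + t * cos s))

lemma exists_polar (k : ℝ × ℝ) : ∃ ρ φ : ℝ, 0 ≤ ρ ∧ k = ρ • uVec φ := by
  refine ⟨‖(⟨k.1, k.2⟩ : ℂ)‖, Complex.arg ⟨k.1, k.2⟩, norm_nonneg _, ?_⟩
  ext
  · simp [uVec]
  · simp [uVec]

lemma nf_pt {r b : ℝ → ℝ} {s : ℝ} (hr : 0 < r s) (t : ℝ) : nf r b s (pt r b s t) = 1 := by
  have h := Real.sin_sq_add_cos_sq s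
  have hr' := hr.ne'
  simp only [nf, pt]
  field_simp
  linear_combination h

lemma det_tangent {r b : ℝ → ℝ} {s : ℝ} (hr : 0 < r s) (t : ℝ) (k : ℝ × ℝ) :
    detV (pt r b s t - pt r b s 0) (k - pt r b s 0) = t * r s ^ 2 * (1 - nf r b s k) := by
  have h := Real.sin_sq_add_cos_sq s
  have hr' := hr.ne'
  simp only [detV, nf, pt, Prod.fst_sub, Prod.snd_sub]
  field_simp
  linear_combination t * r s * h

lemma detV_pt (r b : ℝ → ℝ) (s t u : ℝ) :
    detV (pt r b s t) (pt r b s u) = (u - t) * r s ^ 2 := by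
  have h := Real.sin_sq_add_cos_sq s
  simp only [detV, pt]
  linear_combination (u - t) * r s ^ 2 * h

lemma nf_smul_uVec (r b : ℝ → ℝ) (s ρ φ : ℝ) :
    nf r b s (ρ • uVec φ) = ρ * ((1 / r s) * (cos (φ - s) + b s * sin (φ - s))) := by
  simp only [nf, uVec, Prod.smul_fst, Prod.smul_snd, smul_eq_mul, Real.cos_sub, Real.sin_sub]
  ring

lemma nf_add (r b : ℝ → ℝ) (s : ℝ) (x y : ℝ × ℝ) :
    nf r b s (x + y) = nf r b s x + nf r b s y := by
  simp only [nf, Prod.fst_add, Prod.snd_add]; ring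

lemma nf_smul (r b : ℝ → ℝ) (s c : ℝ) (x : ℝ × ℝ) :
    nf r b s (c • x) = c * nf r b s x := by
  simp only [nf, Prod.smul_fst, Prod.smul_snd, smul_eq_mul]; ring

lemma pt_zero (r b : ℝ → ℝ) (s : ℝ) : pt r b s 0 = r s • uVec s := by
  simp [pt, uVec]

namespace RadialData

variable {K : Set (ℝ × ℝ)} {r b b' : ℝ → ℝ}

lemma contr (h : RadialData K r b b') : Continuous r :=
  continuous_iff_continuousAt.2 fun x => (h.hr x).continuousAt

lemma contb (h : RadialData K r b b') : Continuous b :=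
  continuous_iff_continuousAt.2 fun x => (h.hb x).continuousAt

/-- The value of the moving tangent functional on the fixed direction `u(φ)` increases while the
tangency angle is less than `π` behind `φ` and decreases while it is less than `π` ahead: positive
curvature enters the geometry only through this derivative. -/
lemma hasDerivAt_v (h : RadialData K r b b') (φ s : ℝ) :
    HasDerivAt (fun s => (1 / r s) * (cos (φ - s) + b s * sin (φ - s)))
      ((1 + b s ^ 2 + b' s) / r s * sin (φ - s)) s := by
  have h0 := (h.rpos s).ne'
  have h1 : HasDerivAt (fun s => φ - s) (-1) s := by
    simpa using (hasDerivAt_id s).const_sub φ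
  have := ((hasDerivAt_const s (1:ℝ)).div (h.hr s) h0).mul
    ((h1.cos).add ((h.hb s).mul h1.sin))
  refine HasDerivAt.congr_deriv this ?_
  simp only [Pi.div_apply, Pi.add_apply, Pi.mul_apply]
  field_simp
  ring

lemma v_strictMono (h : RadialData K r b b') (φ : ℝ) :
    StrictMonoOn (fun s => (1 / r s) * (cos (φ - s) + b s * sin (φ - s))) (Icc (φ - π) φ) := by
  apply strictMonoOn_of_deriv_pos (convex_Icc _ _)
  · exact fun x _ => (h.hasDerivAt_v φ x).continuousAt.continuousWithinAt
  · intro x hx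
    rw [interior_Icc] at hx
    rw [(h.hasDerivAt_v φ x).deriv]
    exact mul_pos (div_pos (h.Ppos x) (h.rpos x))
      (sin_pos_of_pos_of_lt_pi (by linarith [hx.2]) (by linarith [hx.1]))

lemma v_strictAnti (h : RadialData K r b b') (φ : ℝ) :
    StrictAntiOn (fun s => (1 / r s) * (cos (φ - s) + b s * sin (φ - s))) (Icc φ (φ + π)) := by
  apply strictAntiOn_of_deriv_neg (convex_Icc _ _)
  · exact fun x _ => (h.hasDerivAt_v φ x).continuousAt.continuousWithinAt
  · intro x hx
    rw [interior_Icc] at hx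
    rw [(h.hasDerivAt_v φ x).deriv]
    exact mul_neg_of_pos_of_neg (div_pos (h.Ppos x) (h.rpos x))
      (sin_neg_of_neg_of_neg_pi_lt (by linarith [hx.1]) (by linarith [hx.2]))

/-- Strict support inequality on a window of one period around `φ`. -/
lemma v_lt (h : RadialData K r b b') {φ s : ℝ} (h1 : φ - π ≤ s) (h2 : s ≤ φ + π) (hne : s ≠ φ) :
    (1 / r s) * (cos (φ - s) + b s * sin (φ - s)) < 1 / r φ := by
  have e : (1 / r φ) * (cos (φ - φ) + b φ * sin (φ - φ)) = 1 / r φ := by simp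
  rcases lt_or_gt_of_ne hne with hlt | hlt
  · have := h.v_strictMono φ ⟨h1, hlt.le⟩ ⟨by linarith [pi_pos], le_rfl⟩ hlt
    simp only [e] at this; exact this
  · have := h.v_strictAnti φ ⟨le_rfl, by linarith [pi_pos]⟩ ⟨hlt.le, h2⟩ hlt
    simp only [e] at this; exact this

lemma nf_periodic (h : RadialData K r b b') (k : ℝ × ℝ) :
    Function.Periodic (fun s => nf r b s k) (2 * π) := by
  intro s; simp [nf, h.rper, h.bper]

lemma pt_periodic (h : RadialData K r b b') (t : ℝ) :
    Function.Periodic (fun s => pt r b s t) (2 * π) := by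
  intro s; simp [pt, h.rper, h.bper]

/-- The tangent functional at `s` is less than `1` at every other point of the curve. -/
lemma nf_curve_lt (h : RadialData K r b b') {φ s : ℝ} (hne : pt r b s 0 ≠ pt r b φ 0) :
    nf r b s (pt r b φ 0) < 1 := by
  have hper : Function.Periodic (fun s => (nf r b s (pt r b φ 0), pt r b s 0)) (2 * π) :=
    fun x => Prod.ext (h.nf_periodic _ x) (h.pt_periodic 0 x)
  obtain ⟨s', hs', e⟩ := hper.exists_mem_Ico (by positivity) s (φ - π)
  simp only [Prod.mk.injEq] at e
  rw [e.1]
  have hne' : s' ≠ φ := by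
    rintro rfl
    exact hne e.2
  rw [pt_zero, nf_smul_uVec]
  have h2 := h.v_lt (φ := φ) (s := s') hs'.1 (by linarith [hs'.2]) hne'
  calc _ < r φ * (1 / r φ) := mul_lt_mul_of_pos_left h2 (h.rpos φ)
    _ = 1 := by field_simp [(h.rpos φ).ne']

lemma nf_curve_le (h : RadialData K r b b') (φ s : ℝ) : nf r b s (pt r b φ 0) ≤ 1 := by
  by_cases hne : pt r b s 0 = pt r b φ 0
  · rw [← hne, nf_pt (h.rpos s)]
  · exact (h.nf_curve_lt hne).le

lemma zero_mem_K (h : RadialData K r b b') : (0 : ℝ × ℝ) ∈ K := interior_subset h.zero_mem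

lemma curve_mem_frontier (h : RadialData K r b b') (φ : ℝ) : pt r b φ 0 ∈ frontier K := by
  rw [h.frontier_eq, pt_zero]; exact ⟨φ, rfl⟩

lemma curve_mem (h : RadialData K r b b') (φ : ℝ) : pt r b φ 0 ∈ K :=
  h.comp.isClosed.frontier_subset (h.curve_mem_frontier φ)

lemma exists_of_mem_frontier (h : RadialData K r b b') {m : ℝ × ℝ} (hm : m ∈ frontier K) :
    ∃ φ, m = pt r b φ 0 := by
  rw [h.frontier_eq] at hm
  obtain ⟨φ, e⟩ := hm
  exact ⟨φ, by rw [pt_zero]; exact e⟩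

/-- A point strictly between the interior point `0` and a point of `K` is not on the boundary. -/
lemma smul_mem_interior (h : RadialData K r b b') {k : ℝ × ℝ} (hk : k ∈ K) {c : ℝ}
    (h0 : 0 < c) (h1 : c < 1) : c • k ∈ interior K := by
  apply h.conv.openSegment_interior_self_subset_interior h.zero_mem hk
  exact ⟨1 - c, c, by linarith, h0, by ring, by simp⟩

/-- `K` is the region `ρ ≤ r(φ)` in polar coordinates. -/
lemma mem_iff (h : RadialData K r b b') {ρ φ : ℝ} (h0 : 0 ≤ ρ) :
    ρ • uVec φ ∈ K ↔ ρ ≤ r φ := by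
  have hr := h.rpos φ
  constructor
  · intro hk
    by_contra! hlt
    have hρ : 0 < ρ := hr.trans hlt
    have hi := h.smul_mem_interior hk (c := r φ / ρ) (by positivity) ((div_lt_one hρ).2 hlt)
    have hf := h.curve_mem_frontier φ
    rw [pt_zero] at hf
    rw [smul_smul, div_mul_cancel₀ _ hρ.ne'] at hi
    exact hf.2 hi
  · intro hle
    have hf := h.curve_mem φ
    rw [pt_zero] at hf
    have : ρ • uVec φ = (1 - ρ / r φ) • (0 : ℝ × ℝ) + (ρ / r φ) • (r φ • uVec φ) := by
      rw [smul_zero, zero_add, smul_smul, div_mul_cancel₀ _ hr.ne']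
    rw [this]
    exact h.conv h.zero_mem_K hf (by have := (div_le_one hr).2 hle; linarith) (by positivity)
      (by ring)

/-- The tangent lines of the curve support `K`. -/
lemma nf_le (h : RadialData K r b b') (s : ℝ) {k : ℝ × ℝ} (hk : k ∈ K) : nf r b s k ≤ 1 := by
  obtain ⟨ρ, φ, h0, rfl⟩ := exists_polar k
  have hle := (h.mem_iff h0).1 hk
  have hc := h.nf_curve_le φ s
  have e : ρ • uVec φ = (ρ / r φ) • pt r b φ 0 := by
    rw [pt_zero, smul_smul, div_mul_cancel₀ _ (h.rpos φ).ne']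
  rw [e, nf_smul]
  have h1 : ρ / r φ ≤ 1 := (div_le_one (h.rpos φ)).2 hle
  have h2 : 0 ≤ ρ / r φ := div_nonneg h0 (h.rpos φ).le
  nlinarith

/-- Equality case of the support inequality on `K`. -/
lemma eq_of_nf_eq_one (h : RadialData K r b b') {s : ℝ} {k : ℝ × ℝ} (hk : k ∈ K)
    (h1 : nf r b s k = 1) : k = pt r b s 0 := by
  obtain ⟨ρ, φ, h0, rfl⟩ := exists_polar k
  have hle := (h.mem_iff h0).1 hk
  have hr := h.rpos φ
  have e : ρ • uVec φ = (ρ / r φ) • pt r b φ 0 := by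
    rw [pt_zero, smul_smul, div_mul_cancel₀ _ hr.ne']
  have hq1 : ρ / r φ ≤ 1 := (div_le_one hr).2 hle
  have hq2 : 0 ≤ ρ / r φ := div_nonneg h0 hr.le
  rw [e, nf_smul] at h1
  have hc := h.nf_curve_le φ s
  by_cases hne : pt r b s 0 = pt r b φ 0
  · have : nf r b s (pt r b φ 0) = 1 := by rw [← hne, nf_pt (h.rpos s)]
    rw [this, mul_one] at h1
    rw [e, h1, one_smul, hne]
  · have hlt := h.nf_curve_lt hne
    have hq : ρ / r φ = 1 := le_antisymm hq1 (by nlinarith)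
    rw [hq, one_mul] at h1
    exact absurd h1 hlt.ne

/-- Points of the tangent lines other than the tangency points lie outside `K`. -/
lemma pt_notMem (h : RadialData K r b b') (s : ℝ) {t : ℝ} (ht : t ≠ 0) : pt r b s t ∉ K := by
  intro hk
  have e := h.eq_of_nf_eq_one hk (nf_pt (h.rpos s) t)
  have := detV_pt r b s 0 t
  rw [e] at this
  have h2 := detV_pt r b s 0 0
  have h3 := h.rpos s
  rw [h2] at this
  have : t * r s ^ 2 = 0 := by linarith
  simp [ht, h3.ne'] at this

/-- On one period, the curve determines its parameter. -/
lemma curve_inj (h : RadialData K r b b') {s s' : ℝ} (hs : s ∈ Ico 0 (2 * π))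
    (hs' : s' ∈ Ico 0 (2 * π)) (e : pt r b s 0 = pt r b s' 0) : s = s' := by
  have h1 : nf r b s (pt r b s' 0) = 1 := by rw [← e, nf_pt (h.rpos s)]
  have h2 : nf r b s' (pt r b s 0) = 1 := by rw [e, nf_pt (h.rpos s')]
  by_contra hne
  -- one of the two angles is within `π` of the other, or of its translate by `2π`
  have key : ∀ x y : ℝ, x - π ≤ y → y ≤ x + π → y ≠ x → nf r b y (pt r b x 0) < 1 := by
    intro x y hxy hyx hn
    rw [pt_zero, nf_smul_uVec]
    calc _ < r x * (1 / r x) := mul_lt_mul_of_pos_left (h.v_lt hxy hyx hn) (h.rpos x)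
      _ = 1 := by field_simp [(h.rpos x).ne']
  obtain ⟨a1, a2⟩ := hs
  obtain ⟨c1, c2⟩ := hs'
  by_cases hA : s' - π ≤ s
  · by_cases hB : s ≤ s' + π
    · linarith [key s' s hA hB hne]
    · push Not at hB
      have := key s (s' + 2 * π) (by linarith) (by linarith) (by linarith)
      have e2 := h.nf_periodic (pt r b s 0) s'
      simp only at e2
      linarith
  · push Not at hA
    have := key s' (s + 2 * π) (by linarith) (by linarith) (by linarith)
    have e2 := h.nf_periodic (pt r b s' 0) s
    simp only at e2
    linarith

/-- The right (`σ = 1`) and left (`σ = -1`) tangent coordinates are injective. -/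
lemma pt_inj (h : RadialData K r b b') {σ : ℝ} (hσ : σ = 1 ∨ σ = -1) {s s' t t' : ℝ}
    (hs : s ∈ Ico 0 (2 * π)) (hs' : s' ∈ Ico 0 (2 * π)) (ht : 0 < t) (ht' : 0 < t')
    (e : pt r b s (σ * t) = pt r b s' (σ * t')) : s = s' ∧ t = t' := by
  have hr := h.rpos s
  have hr' := h.rpos s'
  have d1 := det_tangent (b := b) hr (σ * t) (pt r b s' 0)
  have d2 := det_tangent (b := b) hr' (σ * t') (pt r b s 0)
  -- the two determinants are opposite signed areas of the same triangle
  have hx : detV (pt r b s (σ * t) - pt r b s 0) (pt r b s' 0 - pt r b s 0) =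
      - detV (pt r b s' (σ * t') - pt r b s' 0) (pt r b s 0 - pt r b s' 0) := by
    rw [← e]; simp only [detV, Prod.fst_sub, Prod.snd_sub]; ring
  rw [d1, d2] at hx
  have n1 := h.nf_curve_le s' s
  have n2 := h.nf_curve_le s s'
  have p1 : 0 < t * r s ^ 2 := by positivity
  have p2 : 0 < t' * r s' ^ 2 := by positivity
  have hx' : t * r s ^ 2 * (1 - nf r b s (pt r b s' 0)) =
      -(t' * r s' ^ 2 * (1 - nf r b s' (pt r b s 0))) := by
    rcases hσ with rfl | rfl <;> linarith
  have n3 : nf r b s (pt r b s' 0) = 1 := by nlinarith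
  have es : s = s' := h.curve_inj hs hs' (h.eq_of_nf_eq_one (h.curve_mem s') n3).symm
  subst es
  refine ⟨rfl, ?_⟩
  have q1 := detV_pt r b s 0 (σ * t)
  have q2 := detV_pt r b s 0 (σ * t')
  rw [e, q2] at q1
  have h3 : σ * t' = σ * t := by
    have : r s ^ 2 ≠ 0 := by positivity
    have := mul_right_cancel₀ this q1
    linarith
  rcases hσ with rfl | rfl <;> linarith

/-- Every exterior point has a right and a left tangent line. -/
lemma exists_pt (h : RadialData K r b b') {σ : ℝ} (hσ : σ = 1 ∨ σ = -1) {A : ℝ × ℝ}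
    (hA : A ∉ K) : ∃ s t, s ∈ Ico 0 (2 * π) ∧ 0 < t ∧ A = pt r b s (σ * t) := by
  obtain ⟨ρ, φ, h0, rfl⟩ := exists_polar A
  rw [h.mem_iff h0, not_le] at hA
  have hρ : 0 < ρ := (h.rpos φ).trans hA
  have hrφ := h.rpos φ
  have hlt : 1 / ρ < 1 / r φ := one_div_lt_one_div_of_lt hrφ hA
  -- the tangency angle, found by the intermediate value theorem on the appropriate side of `φ`
  obtain ⟨s, hsin, hv⟩ : ∃ s, 0 < σ * sin (φ - s) ∧
      (1 / r s) * (cos (φ - s) + b s * sin (φ - s)) = 1 / ρ := by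
    have hcont : Continuous (fun s => (1 / r s) * (cos (φ - s) + b s * sin (φ - s))) :=
      continuous_iff_continuousAt.2 fun x => (h.hasDerivAt_v φ x).continuousAt
    have e0 : (1 / r φ) * (cos (φ - φ) + b φ * sin (φ - φ)) = 1 / r φ := by simp
    rcases hσ with rfl | rfl
    · have e1 : (1 / r (φ - π)) * (cos (φ - (φ - π)) + b (φ - π) * sin (φ - (φ - π))) < 0 := by
        have := h.rpos (φ - π)
        simp [this]
      obtain ⟨s, ⟨hs1, hs2⟩, hs3⟩ := intermediate_value_Ioo (by linarith [pi_pos] : φ - π ≤ φ)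
        hcont.continuousOn (show 1 / ρ ∈ Ioo _ _ from
          ⟨e1.trans (by positivity), by simp only [e0]; exact hlt⟩)
      exact ⟨s, by
        rw [one_mul]; exact sin_pos_of_pos_of_lt_pi (by linarith) (by linarith), hs3⟩
    · have e1 : (1 / r (φ + π)) * (cos (φ - (φ + π)) + b (φ + π) * sin (φ - (φ + π))) < 0 := by
        have := h.rpos (φ + π)
        simp [this]
      obtain ⟨s, ⟨hs1, hs2⟩, hs3⟩ := intermediate_value_Ioo' (by linarith [pi_pos] : φ ≤ φ + π)
        hcont.continuousOn (show 1 / ρ ∈ Ioo _ _ from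
          ⟨e1.trans (by positivity), by simp only [e0]; exact hlt⟩)
      exact ⟨s, by
        have := sin_neg_of_neg_of_neg_pi_lt (x := φ - s) (by linarith) (by linarith)
        linarith, hs3⟩
  have hr := h.rpos s
  have hσ2 : σ * σ = 1 := by rcases hσ with rfl | rfl <;> norm_num
  have hpt : ρ • uVec φ = pt r b s (σ * (ρ * (σ * sin (φ - s)) / r s)) := by
    have hc : ρ * (cos (φ - s) + b s * sin (φ - s)) = r s := by
      field_simp at hv; linarith
    have ht : σ * (ρ * (σ * sin (φ - s)) / r s) = ρ * sin (φ - s) / r s := by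
      rw [show σ * (ρ * (σ * sin (φ - s)) / r s) = (σ * σ) * (ρ * sin (φ - s) / r s) by ring,
        hσ2, one_mul]
    rw [ht]
    have hu : cos φ = cos s * cos (φ - s) - sin s * sin (φ - s) := by
      rw [← Real.cos_add]; congr 1; ring
    have hw : sin φ = sin s * cos (φ - s) + cos s * sin (φ - s) := by
      rw [← Real.sin_add]; congr 1; ring
    ext
    · simp only [pt, uVec, Prod.smul_fst, smul_eq_mul, hu]
      field_simp
      linear_combination cos s * hc
    · simp only [pt, uVec, Prod.smul_snd, smul_eq_mul, hw]
      field_simp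
      linear_combination sin s * hc
  obtain ⟨s', hs', e⟩ := (h.pt_periodic (σ * (ρ * (σ * sin (φ - s)) / r s))).exists_mem_Ico₀
    (by positivity) s
  exact ⟨s', _, hs', by positivity, hpt.trans e⟩

/-- The outer billiard map exchanges the two endpoints of a tangent segment centred at its
tangency point. -/
lemma T_pt (h : RadialData K r b b') {T : ℝ × ℝ → ℝ × ℝ} (hT : IsOuterBilliard K T)
    (s : ℝ) {t : ℝ} (ht : 0 < t) : T (pt r b s (-t)) = pt r b s t := by
  obtain ⟨-, hm, -, hdet⟩ := hT _ (h.pt_notMem s (neg_ne_zero.2 ht.ne'))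
  set A := pt r b s (-t) with hA
  set m := (1 / 2 : ℝ) • (A + T A) with hmdef
  have hmK : m ∈ K := h.comp.isClosed.frontier_subset hm
  have hr := h.rpos s
  have h1 := hdet _ (h.curve_mem s)
  have h2 := det_tangent (b := b) hr (-t) m
  have h3 := h.nf_le s hmK
  have e1 : T A - A = (2 : ℝ) • (m - A) := by
    rw [hmdef]; ext <;> simp <;> ring
  have e2 : detV (T A - A) (pt r b s 0 - m) = 2 * detV (A - pt r b s 0) (m - pt r b s 0) := by
    rw [e1]; simp only [detV, Prod.fst_sub, Prod.snd_sub, Prod.smul_fst, Prod.smul_snd,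
      smul_eq_mul]; ring
  rw [e2, h2] at h1
  have p1 : 0 < t * r s ^ 2 := by positivity
  have h4 : nf r b s m = 1 := by nlinarith
  have e3 := h.eq_of_nf_eq_one hmK h4
  have e4 : T A = (2 : ℝ) • m - A := by
    rw [hmdef]; ext <;> simp
  rw [e4, e3, hA]
  ext <;> simp [pt] <;> ring

end RadialData

/-! ### Bounds for the generating function -/

lemma detV_smul_uVec (a c x y : ℝ) : detV (a • uVec x) (c • uVec y) = a * c * sin (y - x) := by
  simp only [detV, uVec, Prod.smul_fst, Prod.smul_snd, smul_eq_mul, Real.sin_sub]; ring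

/-- The arithmetic-geometric mean inequality, in the form comparing a segment whose midpoint lies
below a line with the segment that the line itself cuts from the same two rays. -/
lemma amgm_aux {a c d e : ℝ} (ha : 0 < a) (hc : 0 < c) (hd : 0 < d) (he : 0 < e)
    (h : a * d + c * e ≤ 2) : a * c ≤ 1 / (d * e) := by
  rw [le_div_iff₀ (by positivity)]
  nlinarith [sq_nonneg (a * d - c * e), mul_pos ha hd, mul_pos hc he]

namespace RadialData

variable {K : Set (ℝ × ℝ)} {r b b' : ℝ → ℝ} {S : ℝ → ℝ → ℝ}

/-- Every tangent line of `∂K` cuts from the sector a triangle of area at least `S`: the midpoint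
of the segment defining `S` lies in `K`, hence below the tangent line. -/
lemma S_le (h : RadialData K r b b') (hS : IsGenFun K S) {x₀ x₁ : ℝ} (h01 : x₀ < x₁)
    (h10 : x₁ < x₀ + π) {s σ₀ σ₁ : ℝ} {B₀ B₁ : ℝ × ℝ} (hσ₀ : 0 < σ₀) (hσ₁ : 0 < σ₁)
    (hB₀ : B₀ = σ₀ • uVec x₀) (hB₁ : B₁ = σ₁ • uVec x₁) (hn₀ : 0 < nf r b s B₀)
    (hn₁ : 0 < nf r b s B₁) :
    S x₀ x₁ ≤ (1 / 2) * detV B₀ B₁ / (nf r b s B₀ * nf r b s B₁) := by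
  obtain ⟨M₀, M₁, ⟨⟨s₀, hs₀, rfl⟩, ⟨s₁, hs₁, rfl⟩, hm, -⟩, hSe⟩ := hS x₀ x₁ h01 h10
  have hsin : 0 < sin (x₁ - x₀) := sin_pos_of_pos_of_lt_pi (by linarith) (by linarith)
  have hle := h.nf_le s (h.comp.isClosed.frontier_subset hm)
  have e0 : nf r b s (uVec x₀) = nf r b s B₀ / σ₀ := by
    rw [hB₀, nf_smul]; field_simp
  have e1 : nf r b s (uVec x₁) = nf r b s B₁ / σ₁ := by
    rw [hB₁, nf_smul]; field_simp
  rw [nf_smul, nf_add, nf_smul, nf_smul, e0, e1] at hle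
  have key := amgm_aux (a := s₀ / σ₀) (c := s₁ / σ₁) (by positivity) (by positivity) hn₀ hn₁
    (by have e : s₀ / σ₀ * nf r b s B₀ + s₁ / σ₁ * nf r b s B₁ =
          s₀ * (nf r b s B₀ / σ₀) + s₁ * (nf r b s B₁ / σ₁) := by ring
        linarith)
  rw [hSe, detV_smul_uVec, abs_of_pos (by positivity)]
  have hd : detV B₀ B₁ = σ₀ * σ₁ * sin (x₁ - x₀) := by rw [hB₀, hB₁, detV_smul_uVec]
  rw [hd]
  calc s₀ * s₁ * sin (x₁ - x₀) / 2
      = (1 / 2) * (σ₀ * σ₁ * sin (x₁ - x₀)) * (s₀ / σ₀ * (s₁ / σ₁)) := by field_simp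
    _ ≤ (1 / 2) * (σ₀ * σ₁ * sin (x₁ - x₀)) * (1 / (nf r b s B₀ * nf r b s B₁)) :=
        mul_le_mul_of_nonneg_left key (by positivity)
    _ = _ := by ring

/-- A segment not collinear with `0` and meeting `K` only at its midpoint, which is on the boundary,
spans a line supporting `K`. -/
lemma support_of_midpoint (h : RadialData K r b b') {M₀ M₁ : ℝ × ℝ} (hd : 0 < detV M₀ M₁)
    (hm : (1 / 2 : ℝ) • (M₀ + M₁) ∈ frontier K)
    (hseg : segment ℝ M₀ M₁ ∩ K = {(1 / 2 : ℝ) • (M₀ + M₁)}) {k : ℝ × ℝ} (hk : k ∈ K) :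
    detV k (M₁ - M₀) ≤ detV M₀ M₁ := by
  by_contra! hlt
  set D := detV M₀ M₁ with hD
  set m := (1 / 2 : ℝ) • (M₀ + M₁) with hmd
  set E := detV k (M₁ - M₀) with hE
  have hEpos : 0 < E := hd.trans hlt
  -- the point where the segment from `0` to `k` crosses the line is interior to `K`
  set c := (D / E) • k with hc
  have hcI : c ∈ interior K := h.smul_mem_interior hk (by positivity) ((div_lt_one hEpos).2 hlt)
  have hcm : c ≠ m := fun e => hm.2 (e ▸ hcI)
  obtain ⟨l, hl⟩ : ∃ l : ℝ, c - m = l • (M₁ - M₀) := by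
    -- coordinates of `k` in the basis `M₀, M₁`
    refine ⟨(1 / E) * detV M₀ k - 1 / 2, ?_⟩
    have hk1 : D * k.1 = detV k M₁ * M₀.1 + detV M₀ k * M₁.1 := by
      simp only [hD, detV]; ring
    have hk2 : D * k.2 = detV k M₁ * M₀.2 + detV M₀ k * M₁.2 := by
      simp only [hD, detV]; ring
    have hEE : E = detV k M₁ + detV M₀ k := by
      simp only [hE, detV, Prod.fst_sub, Prod.snd_sub]; ring
    have hEne := hEpos.ne'
    ext
    · simp only [hc, hmd, Prod.fst_sub, Prod.smul_fst, Prod.fst_add, smul_eq_mul]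
      field_simp
      linear_combination 2 * hk1 - 2 * M₀.1 * hEE
    · simp only [hc, hmd, Prod.snd_sub, Prod.smul_snd, Prod.snd_add, smul_eq_mul]
      field_simp
      linear_combination 2 * hk2 - 2 * M₀.2 * hEE
  have hl0 : l ≠ 0 := by
    rintro rfl
    rw [zero_smul, sub_eq_zero] at hl
    exact hcm hl
  have hmK : m ∈ K := h.comp.isClosed.frontier_subset hm
  have hcK : c ∈ K := interior_subset hcI
  obtain ⟨δ, hδ0, hδ1, hδ2⟩ : ∃ δ : ℝ, 0 < δ ∧ δ ≤ 1 ∧ |δ * l| ≤ 1 / 2 := by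
    have hl' := abs_pos.2 hl0
    refine ⟨1 / (1 + 2 * |l|), by positivity, ?_, ?_⟩
    · rw [div_le_one (by positivity)]; linarith
    · rw [abs_mul, abs_of_pos (by positivity), div_mul_eq_mul_div, one_mul,
        div_le_iff₀ (by positivity)]
      linarith
  have hpK : (1 - δ) • m + δ • c ∈ K := h.conv hmK hcK (by linarith) hδ0.le (by ring)
  have hp : (1 - δ) • m + δ • c = m + (δ * l) • (M₁ - M₀) := by
    rw [mul_smul, ← hl, smul_sub, sub_smul, one_smul]; abel
  have hpS : (1 - δ) • m + δ • c ∈ segment ℝ M₀ M₁ := by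
    rw [abs_le] at hδ2
    refine ⟨1 / 2 - δ * l, 1 / 2 + δ * l, by linarith, by linarith, by ring, ?_⟩
    rw [hp, hmd]
    ext <;> simp <;> ring
  have hmem : (1 - δ) • m + δ • c ∈ segment ℝ M₀ M₁ ∩ K := ⟨hpS, hpK⟩
  rw [hseg, mem_singleton_iff, hp, add_eq_left, mul_smul, ← hl, smul_eq_zero, sub_eq_zero] at hmem
  rcases hmem with h0 | h0
  · exact hδ0.ne' h0
  · exact hcm h0

/-- The value of the generating function on a tangent segment bisected by its tangency point. -/
lemma S_eq (h : RadialData K r b b') (hS : IsGenFun K S) {x₀ x₁ : ℝ} (h01 : x₀ < x₁)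
    (h10 : x₁ < x₀ + π) {s t σ₀ σ₁ : ℝ} (hσ₀ : 0 < σ₀) (hσ₁ : 0 < σ₁)
    (hB₀ : pt r b s (-t) = σ₀ • uVec x₀) (hB₁ : pt r b s t = σ₁ • uVec x₁) :
    S x₀ x₁ = t * r s ^ 2 := by
  have hr := h.rpos s
  apply le_antisymm
  · have := h.S_le hS h01 h10 (s := s) hσ₀ hσ₁ hB₀ hB₁ (by rw [nf_pt hr]; norm_num)
      (by rw [nf_pt hr]; norm_num)
    rw [nf_pt hr, nf_pt hr, detV_pt] at this
    linarith
  obtain ⟨M₀, M₁, ⟨⟨s₀, hs₀, rfl⟩, ⟨s₁, hs₁, rfl⟩, hm, hseg⟩, hSe⟩ := hS x₀ x₁ h01 h10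
  have hsin : 0 < sin (x₁ - x₀) := sin_pos_of_pos_of_lt_pi (by linarith) (by linarith)
  have hd : detV (s₀ • uVec x₀) (s₁ • uVec x₁) = s₀ * s₁ * sin (x₁ - x₀) := detV_smul_uVec ..
  have hdpos : 0 < detV (s₀ • uVec x₀) (s₁ • uVec x₁) := by rw [hd]; positivity
  have hsup := h.support_of_midpoint hdpos hm hseg (h.curve_mem s)
  have hmid : pt r b s 0 = (1 / 2 : ℝ) • (σ₀ • uVec x₀ + σ₁ • uVec x₁) := by
    rw [← hB₀, ← hB₁]; ext <;> simp [pt] <;> ring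
  have hexp : detV (pt r b s 0) (s₁ • uVec x₁ - s₀ • uVec x₀) =
      (1 / 2) * (σ₀ * s₁ + σ₁ * s₀) * sin (x₁ - x₀) := by
    rw [hmid]
    simp only [detV, uVec, Prod.smul_fst, Prod.smul_snd, smul_eq_mul, Real.sin_sub, Prod.fst_add,
      Prod.snd_add, Prod.fst_sub, Prod.snd_sub]
    ring
  rw [hexp, hd] at hsup
  have hsup2 : (1 / 2) * (σ₀ * s₁ + σ₁ * s₀) ≤ s₀ * s₁ := le_of_mul_le_mul_right hsup hsin
  have key := amgm_aux (a := σ₀ / s₀) (c := σ₁ / s₁) (d := 1) (e := 1) (by positivity)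
    (by positivity) one_pos one_pos (by
      rw [mul_one, mul_one, div_add_div _ _ hs₀.ne' hs₁.ne', div_le_iff₀ (by positivity)]
      linarith)
  have hle : σ₀ * σ₁ ≤ s₀ * s₁ := by
    rw [div_mul_div_comm, mul_one, div_one, div_le_one (by positivity)] at key
    exact key
  have hdet := detV_pt r b s (-t) t
  rw [hB₀, hB₁, detV_smul_uVec] at hdet
  rw [hSe, hd, abs_of_pos (by positivity)]
  nlinarith [mul_le_mul_of_nonneg_right hle hsin.le]

end RadialData

/-! ### The second variation along a tangent segment -/

/-- Necessary second-order condition at a local minimum. -/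
lemma second_deriv_nonneg {f f' : ℝ → ℝ} {q : ℝ} (hmin : IsLocalMin f 0)
    (hf : ∀ᶠ ε in nhds 0, HasDerivAt f (f' ε) ε) (hf' : HasDerivAt f' q 0) : 0 ≤ q := by
  by_contra! hq
  have h0 : f' 0 = 0 := hmin.hasDerivAt_eq_zero hf.self_of_nhds
  have hd : deriv f =ᶠ[nhds 0] f' := hf.mono fun _ h => h.deriv
  have hdd : deriv (deriv f) 0 = q := by rw [hd.deriv_eq, hf'.deriv]
  have hmax : IsLocalMax f 0 :=
    isLocalMax_of_deriv_deriv_neg (by rw [hdd]; exact hq) (by rw [hd.self_of_nhds, h0])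
      hf.self_of_nhds.continuousAt
  have hc : f =ᶠ[nhds 0] fun _ => f 0 := by
    filter_upwards [hmin, hmax] with x h1 h2 using le_antisymm h2 h1
  have h3 : deriv f =ᶠ[nhds 0] fun _ => 0 := by
    have := hc.deriv
    simpa using this
  rw [h3.deriv_eq] at hdd
  simp at hdd
  linarith

/-- A continuous factor does not spoil differentiability at a zero of the other factor. -/
lemma hasDerivAt_mul_of_zero {p V : ℝ → ℝ} {V' : ℝ} (hp : ContinuousAt p 0)
    (hV : HasDerivAt V V' 0) (h0 : V 0 = 0) :
    HasDerivAt (fun ε => p ε * V ε) (p 0 * V') 0 := by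
  rw [hasDerivAt_iff_tendsto_slope] at hV ⊢
  refine ((hp.tendsto.mono_left nhdsWithin_le_nhds).mul hV).congr fun x => ?_
  simp only [slope_def_field, h0]
  ring

/-- Second derivative of a quotient `n / (d₀ d₁)` whose denominators have derivatives
`aᵢ + p mᵢ` with `p` merely continuous: it exists because `m₀ + m₁` vanishes at the base point. -/
lemma second_deriv_aux {n n1 d0 d1 a0 a1 m0 m1 p : ℝ → ℝ} {n2 a0' a1' m0' m1' : ℝ}
    (hn : ∀ ε, HasDerivAt n (n1 ε) ε) (hn1 : HasDerivAt n1 n2 0)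
    (hd0 : ∀ ε, HasDerivAt d0 (a0 ε + p ε * m0 ε) ε)
    (hd1 : ∀ ε, HasDerivAt d1 (a1 ε + p ε * m1 ε) ε)
    (ha0 : HasDerivAt a0 a0' 0) (ha1 : HasDerivAt a1 a1' 0)
    (hm0 : HasDerivAt m0 m0' 0) (hm1 : HasDerivAt m1 m1' 0) (hp : ContinuousAt p 0)
    (e0 : d0 0 = 1) (e1 : d1 0 = 1) (em : m0 0 + m1 0 = 0) :
    ∃ E' : ℝ → ℝ, (∀ᶠ ε in nhds 0, HasDerivAt (fun ε => n ε / (d0 ε * d1 ε)) (E' ε) ε) ∧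
      HasDerivAt E'
        ((n2 - n1 0 * (a0 0 + a1 0) - n 0 * ((a0' - a0 0 * (a0 0 + p 0 * m0 0)) +
            (a1' - a1 0 * (a1 0 + p 0 * m1 0)))
          - (n1 0 - n 0 * (a0 0 + a1 0)) * (a0 0 + a1 0))
          - p 0 * (n 0 * ((m0' - m0 0 * (a0 0 + p 0 * m0 0)) +
            (m1' - m1 0 * (a1 0 + p 0 * m1 0))))) 0 := by
  refine ⟨fun ε => (n1 ε - n ε * (a0 ε / d0 ε + a1 ε / d1 ε)) / (d0 ε * d1 ε)
    - p ε * (n ε * (m0 ε / d0 ε + m1 ε / d1 ε) / (d0 ε * d1 ε)), ?_, ?_⟩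
  · have c0 : ∀ᶠ ε in nhds 0, d0 ε ≠ 0 :=
      (hd0 0).continuousAt.eventually_ne (by rw [e0]; norm_num)
    have c1 : ∀ᶠ ε in nhds 0, d1 ε ≠ 0 :=
      (hd1 0).continuousAt.eventually_ne (by rw [e1]; norm_num)
    filter_upwards [c0, c1] with ε h0 h1
    refine HasDerivAt.congr_deriv ((hn ε).div ((hd0 ε).mul (hd1 ε)) (mul_ne_zero h0 h1)) ?_
    field_simp
    ring
  · have h0 : d0 0 ≠ 0 := by rw [e0]; norm_num
    have h1 : d1 0 ≠ 0 := by rw [e1]; norm_num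
    have hDD := (hd0 0).mul (hd1 0)
    have hU := (hn1.sub ((hn 0).mul ((ha0.div (hd0 0) h0).add (ha1.div (hd1 0) h1)))).div hDD
      (mul_ne_zero h0 h1)
    have hV := ((hn 0).mul ((hm0.div (hd0 0) h0).add (hm1.div (hd1 0) h1))).div hDD
      (mul_ne_zero h0 h1)
    have em' : m1 0 = - m0 0 := by linarith
    have hpV := hasDerivAt_mul_of_zero hp hV (by simp [e0, e1, em])
    refine HasDerivAt.congr_deriv (hU.sub hpV) ?_
    simp only [Pi.mul_apply, Pi.add_apply, Pi.div_apply, Pi.sub_apply, e0, e1, em']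
    ring

/-- Rotation by a right angle. -/
def rotJ (A : ℝ × ℝ) : ℝ × ℝ := (-A.2, A.1)

/-- Squared length, in units of `r²`, of the point `pt r b s t` with `β = b s`. -/
def yq (β t : ℝ) : ℝ := t ^ 2 + (1 - β * t) ^ 2

/-- The second variation of the generating function along one tangent segment, as a quadratic
form in the angular variations `ξ₀, ξ₁` of its endpoints. Here `R = r`, `β = b`, and
`P = 1 + b² + b' = (r² + 2 r'² - r r'') / r²`. -/
def qform (R β P t ξ₀ ξ₁ : ℝ) : ℝ :=
  R ^ 2 * (((1 + β ^ 2) * t - β) * yq β t * ξ₁ ^ 2 + ((1 + β ^ 2) * t + β) * yq β (-t) * ξ₀ ^ 2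
    - t * P / (2 * (1 + t ^ 2 * P)) * (yq β (-t) * ξ₀ + yq β t * ξ₁) ^ 2)

/-- The area cut by the tangent line at `s + ε η` from the sector between the rays through the
endpoints of the tangent segment at `s`, each endpoint `A` being moved to `A + ε ξ J A`. -/
def cutArea (r b : ℝ → ℝ) (s t η ξ₀ ξ₁ ε : ℝ) : ℝ :=
  (1 / 2) * detV (pt r b s (-t) + (ε * ξ₀) • rotJ (pt r b s (-t)))
      (pt r b s t + (ε * ξ₁) • rotJ (pt r b s t)) /
    (nf r b (s + ε * η) (pt r b s (-t) + (ε * ξ₀) • rotJ (pt r b s (-t))) *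
      nf r b (s + ε * η) (pt r b s t + (ε * ξ₁) • rotJ (pt r b s t)))

namespace RadialData

variable {K : Set (ℝ × ℝ)} {r b b' : ℝ → ℝ} {S : ℝ → ℝ → ℝ}

lemma hasDerivAt_nf_const (h : RadialData K r b b') (k : ℝ × ℝ) (s : ℝ) :
    HasDerivAt (fun s => nf r b s k)
      ((1 + b s ^ 2 + b' s) / r s * (cos s * k.2 - sin s * k.1)) s := by
  have h0 := (h.rpos s).ne'
  have := ((hasDerivAt_const s (1:ℝ)).div (h.hr s) h0).mul
    ((((Real.hasDerivAt_cos s).mul_const k.1).add ((Real.hasDerivAt_sin s).mul_const k.2)).add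
      ((h.hb s).mul (((Real.hasDerivAt_cos s).mul_const k.2).sub
        ((Real.hasDerivAt_sin s).mul_const k.1))))
  refine HasDerivAt.congr_deriv this ?_
  simp only [Pi.div_apply, Pi.add_apply, Pi.mul_apply, Pi.sub_apply]
  field_simp
  ring

lemma hasDerivAt_path (h : RadialData K r b b') (A C : ℝ × ℝ) (s η ε : ℝ) :
    HasDerivAt (fun ε => nf r b (s + ε * η) (A + ε • C))
      (nf r b (s + ε * η) C + η * ((1 + b (s + ε * η) ^ 2 + b' (s + ε * η)) / r (s + ε * η)) *
        (cos (s + ε * η) * (A + ε • C).2 - sin (s + ε * η) * (A + ε • C).1)) ε := by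
  have hs : HasDerivAt (fun ε : ℝ => s + ε * η) η ε := by
    simpa using ((hasDerivAt_id ε).mul_const η).const_add s
  have hA := (h.hasDerivAt_nf_const A (s + ε * η)).comp ε hs
  have hC := (h.hasDerivAt_nf_const C (s + ε * η)).comp ε hs
  have := hA.add ((hasDerivAt_id ε).mul hC)
  refine HasDerivAt.congr_of_eventuallyEq (HasDerivAt.congr_deriv this ?_)
    (Filter.Eventually.of_forall fun x => ?_)
  · simp only [Function.comp, id, Prod.fst_add, Prod.snd_add, Prod.smul_fst, Prod.smul_snd,
      smul_eq_mul]
    ring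
  · simp only [nf_add, nf_smul, Pi.add_apply, Pi.mul_apply, Function.comp, id]

/-- The area cut by a suitably rotating tangent line has second derivative `qform`. Since `b'` is
only continuous, the rotation speed `η` must be constant, and differentiability relies on the
segment being bisected by its tangency point. -/
lemma second_var (h : RadialData K r b b') (s t ξ₀ ξ₁ : ℝ) (ht : 0 < t) :
    ∃ (η : ℝ) (E' : ℝ → ℝ),
      (∀ᶠ ε in nhds 0, HasDerivAt (cutArea r b s t η ξ₀ ξ₁) (E' ε) ε) ∧
      HasDerivAt E' (qform (r s) (b s) (1 + b s ^ 2 + b' s) t ξ₀ ξ₁) 0 := by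
  set P := 1 + b s ^ 2 + b' s with hP
  have hPpos : 0 < P := h.Ppos s
  have hr := h.rpos s
  -- the rotation speed minimizing the second derivative
  set η := (yq (b s) (-t) * ξ₀ + yq (b s) t * ξ₁) / (2 * (1 + t ^ 2 * P)) with hη
  refine ⟨η, ?_⟩
  set A0 := pt r b s (-t) with hA0
  set A1 := pt r b s t with hA1
  have hs : ∀ ε, HasDerivAt (fun ε : ℝ => s + ε * η) η ε := fun ε => by
    simpa using ((hasDerivAt_id ε).mul_const η).const_add s
  -- the moving tangent functional on a rotated vertex, its derivative in the form `a + p m`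
  have hd : ∀ (A : ℝ × ℝ) (ξ ε : ℝ), HasDerivAt
      (fun ε => nf r b (s + ε * η) (A + (ε * ξ) • rotJ A))
      (nf r b (s + ε * η) (ξ • rotJ A) +
        η * ((1 + b (s + ε * η) ^ 2 + b' (s + ε * η)) / r (s + ε * η)) *
        (cos (s + ε * η) * (A + (ε * ξ) • rotJ A).2 -
          sin (s + ε * η) * (A + (ε * ξ) • rotJ A).1)) ε := by
    intro A ξ ε
    have := h.hasDerivAt_path A (ξ • rotJ A) s η ε
    simpa only [smul_smul] using this
  have ha : ∀ (A : ℝ × ℝ) (ξ : ℝ), HasDerivAt (fun ε => nf r b (s + ε * η) (ξ • rotJ A))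
      (P / r s * (cos s * (ξ * A.1) - sin s * (ξ * (-A.2))) * η) 0 := by
    intro A ξ
    have h1 := (h.hasDerivAt_nf_const (ξ • rotJ A) (s + 0 * η)).comp 0 (hs 0)
    refine HasDerivAt.congr_deriv h1 ?_
    simp [rotJ, hP]
  have hm : ∀ (A : ℝ × ℝ) (ξ : ℝ), HasDerivAt
      (fun ε => cos (s + ε * η) * (A + (ε * ξ) • rotJ A).2 -
          sin (s + ε * η) * (A + (ε * ξ) • rotJ A).1)
      (-η * (sin s * A.2 + cos s * A.1) + ξ * (cos s * A.1 + sin s * A.2)) 0 := by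
    intro A ξ
    have h1 := ((hs 0).cos.mul ((((hasDerivAt_id (0:ℝ)).mul_const (ξ * A.1)).const_add A.2))).sub
      ((hs 0).sin.mul ((((hasDerivAt_id (0:ℝ)).mul_const (ξ * (-A.2))).const_add A.1)))
    have h2 : (fun ε => cos (s + ε * η) * (A + (ε * ξ) • rotJ A).2 -
          sin (s + ε * η) * (A + (ε * ξ) • rotJ A).1) =
        (fun ε => cos (s + ε * η) * (A.2 + id ε * (ξ * A.1)) -
          sin (s + ε * η) * (A.1 + id ε * (ξ * (-A.2)))) := by
      funext ε; simp only [rotJ, Prod.fst_add, Prod.snd_add, Prod.smul_fst, Prod.smul_snd,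
        smul_eq_mul, id]; ring
    rw [h2]
    refine HasDerivAt.congr_deriv h1 ?_
    simp
    ring
  have hp : ContinuousAt
      (fun ε => η * ((1 + b (s + ε * η) ^ 2 + b' (s + ε * η)) / r (s + ε * η))) 0 := by
    have c1 := h.contb; have c2 := h.contr; have c3 := h.hb'
    apply Continuous.continuousAt
    refine continuous_const.mul (Continuous.div (by fun_prop) (by fun_prop) fun x => (h.rpos _).ne')
  have hn : ∀ ε, HasDerivAt (fun ε => (1 / 2) * detV (A0 + (ε * ξ₀) • rotJ A0)
        (A1 + (ε * ξ₁) • rotJ A1))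
      ((1 / 2) * (detV (ξ₀ • rotJ A0) A1 + detV A0 (ξ₁ • rotJ A1)
        + 2 * ε * detV (ξ₀ • rotJ A0) (ξ₁ • rotJ A1))) ε := by
    intro ε
    have h1 := ((((hasDerivAt_id ε).mul_const (detV (ξ₀ • rotJ A0) A1 + detV A0 (ξ₁ • rotJ A1))).add
      (((hasDerivAt_id ε).pow 2).mul_const (detV (ξ₀ • rotJ A0) (ξ₁ • rotJ A1)))).const_add
        (detV A0 A1)).const_mul (1 / 2)
    refine HasDerivAt.congr_of_eventuallyEq (HasDerivAt.congr_deriv h1 ?_)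
      (Filter.Eventually.of_forall fun x => ?_)
    · simp
    · simp only [detV, rotJ, Prod.fst_add, Prod.snd_add, Prod.smul_fst, Prod.smul_snd,
        smul_eq_mul, id, Pi.add_apply, Pi.pow_apply]
      ring
  have hn1 : HasDerivAt (fun ε => (1 / 2) * (detV (ξ₀ • rotJ A0) A1 + detV A0 (ξ₁ • rotJ A1)
        + 2 * ε * detV (ξ₀ • rotJ A0) (ξ₁ • rotJ A1)))
      (detV (ξ₀ • rotJ A0) (ξ₁ • rotJ A1)) 0 := by
    have h1 := ((((hasDerivAt_id (0:ℝ)).const_mul 2).mul_const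
      (detV (ξ₀ • rotJ A0) (ξ₁ • rotJ A1))).const_add
        (detV (ξ₀ • rotJ A0) A1 + detV A0 (ξ₁ • rotJ A1))).const_mul (1 / 2)
    refine HasDerivAt.congr_deriv h1 ?_
    simp
  have hsc := Real.sin_sq_add_cos_sq s
  obtain ⟨E', h1, h2⟩ := second_deriv_aux hn hn1 (hd A0 ξ₀) (hd A1 ξ₁) (ha A0 ξ₀) (ha A1 ξ₁)
    (hm A0 ξ₀) (hm A1 ξ₁) hp
    (by simp [hA0, nf_pt hr]) (by simp [hA1, nf_pt hr])
    (by simp only [hA0, hA1, pt, zero_mul, add_zero, zero_smul]; ring)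
  refine ⟨E', h1, h2.congr_deriv ?_⟩
  clear h1 h2 hn hn1 hd ha hm hp
  -- evaluation in the orthonormal frame at angle `s`
  have f1 : ∀ u, cos s * (pt r b s u).1 + sin s * (pt r b s u).2 = r s * (1 - b s * u) := by
    intro u; simp only [pt]; linear_combination r s * (1 - b s * u) * hsc
  have f2 : ∀ u, cos s * (pt r b s u).2 - sin s * (pt r b s u).1 = r s * u := by
    intro u; simp only [pt]; linear_combination r s * u * hsc
  have f3 : ∀ u ξ, nf r b s (ξ • rotJ (pt r b s u)) = ξ * (b s - (1 + b s ^ 2) * u) := by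
    intro u ξ
    simp only [nf, rotJ, pt, Prod.smul_fst, Prod.smul_snd, smul_eq_mul]
    field_simp
    linear_combination ξ * (b s - (1 + b s ^ 2) * u) * hsc
  have f4 : detV A0 A1 = 2 * t * r s ^ 2 := by rw [hA0, hA1, detV_pt]; ring
  have f5 : detV (ξ₀ • rotJ A0) A1 + detV A0 (ξ₁ • rotJ A1) =
      (ξ₁ - ξ₀) * r s ^ 2 * (1 - (1 + b s ^ 2) * t ^ 2) := by
    simp only [hA0, hA1, detV, rotJ, pt, Prod.smul_fst, Prod.smul_snd, smul_eq_mul]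
    linear_combination (ξ₁ - ξ₀) * r s ^ 2 * (1 - (1 + b s ^ 2) * t ^ 2) * hsc
  have f6 : detV (ξ₀ • rotJ A0) (ξ₁ • rotJ A1) = ξ₀ * ξ₁ * (2 * t * r s ^ 2) := by
    simp only [hA0, hA1, detV, rotJ, pt, Prod.smul_fst, Prod.smul_snd, smul_eq_mul]
    linear_combination ξ₀ * ξ₁ * (2 * t * r s ^ 2) * hsc
  have f1a : ∀ u, sin s * (pt r b s u).2 + cos s * (pt r b s u).1 = r s * (1 - b s * u) := by
    intro u; rw [← f1 u]; ring
  have f1b : ∀ u ξ, cos s * (ξ * (pt r b s u).1) - sin s * (ξ * -(pt r b s u).2) =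
      ξ * (r s * (1 - b s * u)) := by
    intro u ξ; rw [← f1 u]; ring
  simp only [zero_mul, add_zero, mul_zero, zero_smul]
  rw [f4, f5, f6]
  simp only [hA0, hA1, f1, f1a, f1b, f2, f3, ← hP]
  simp only [qform, yq] at hη ⊢
  rw [hη]
  have hD : 1 + t ^ 2 * P ≠ 0 := by positivity
  field_simp
  ring

end RadialData

/-! ### Orbits and their second variation -/

lemma uVec_periodic : Function.Periodic uVec (2 * π) := by
  intro x; simp [uVec]

/-- A vector to the left of `ρ u(φ)` has a polar angle in `(φ, φ + π)`. -/
lemma exists_angle_fwd {ρ φ : ℝ} {A' : ℝ × ℝ} (hρ : 0 < ρ) (hd : 0 < detV (ρ • uVec φ) A') :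
    ∃ φ' ρ' : ℝ, φ < φ' ∧ φ' < φ + π ∧ 0 < ρ' ∧ A' = ρ' • uVec φ' := by
  obtain ⟨ρ', ψ, h0, rfl⟩ := exists_polar A'
  obtain ⟨φ', ⟨h1, h2⟩, e⟩ := uVec_periodic.exists_mem_Ico (by positivity) ψ φ
  rw [e, detV_smul_uVec] at hd
  have hρ' : 0 < ρ' := by
    rcases h0.eq_or_lt with h | h
    · rw [← h] at hd; simp at hd
    · exact h
  have hsin : 0 < sin (φ' - φ) := pos_of_mul_pos_right hd (by positivity)
  refine ⟨φ', ρ', ?_, ?_, hρ', by rw [e]⟩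
  · rcases h1.eq_or_lt with h | h
    · rw [h] at hsin; simp at hsin
    · exact h
  · by_contra! hge
    have : sin (φ' - φ) ≤ 0 := by
      have := sin_nonneg_of_nonneg_of_le_pi (x := φ' - φ - π) (by linarith) (by linarith)
      rw [Real.sin_sub_pi] at this; linarith
    linarith

lemma exists_angle_bwd {ρ φ : ℝ} {A' : ℝ × ℝ} (hρ : 0 < ρ) (hd : 0 < detV A' (ρ • uVec φ)) :
    ∃ φ' ρ' : ℝ, φ' < φ ∧ φ < φ' + π ∧ 0 < ρ' ∧ A' = ρ' • uVec φ' := by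
  have e : ∀ c x : ℝ, detV (c • uVec x) A' = - detV A' (c • uVec x) := by
    intro c x; simp only [detV]; ring
  obtain ⟨φ', ρ', h1, h2, h3, h4⟩ := exists_angle_fwd (ρ := ρ) (φ := φ - π) (A' := A') hρ (by
    rw [e]
    have : uVec (φ - π) = - uVec φ := by ext <;> simp [uVec, Real.cos_sub_pi, Real.sin_sub_pi]
    rw [this]
    simp only [detV, smul_neg, Prod.fst_neg, Prod.snd_neg] at hd ⊢
    linarith)
  exact ⟨φ', ρ', by linarith, by linarith, h3, h4⟩

/-- Turning a vertex perpendicularly to its radius changes its polar angle by an arctangent. -/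
lemma rot_polar {A : ℝ × ℝ} {ρ φ : ℝ} (hA : A = ρ • uVec φ) (c : ℝ) :
    A + c • rotJ A = (ρ * √(1 + c ^ 2)) • uVec (φ + arctan c) := by
  have hs : √(1 + c ^ 2) ≠ 0 := by positivity
  subst hA
  ext <;> simp only [rotJ, uVec, Prod.fst_add, Prod.snd_add, Prod.smul_fst, Prod.smul_snd,
    smul_eq_mul, Real.cos_add, Real.sin_add, Real.cos_arctan, Real.sin_arctan] <;>
    field_simp
  ring

/-- A relation that can be followed forwards and backwards has a two-sided orbit. -/
lemma exists_biSeq {α : Type*} (R : α → α → Prop) (hf : ∀ x, ∃ y, R x y) (hb : ∀ x, ∃ y, R y x)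
    (z₀ : α) : ∃ z : ℤ → α, z 0 = z₀ ∧ ∀ n, R (z n) (z (n + 1)) := by
  choose τ hτ using hf
  choose σ hσ using hb
  refine ⟨fun n => Int.rec (fun k => τ^[k] z₀) (fun k => σ^[k + 1] z₀) n, rfl, ?_⟩
  intro n
  match n with
  | Int.ofNat k =>
    change R (τ^[k] z₀) (τ^[k + 1] z₀)
    rw [Function.iterate_succ_apply']
    exact hτ _
  | Int.negSucc 0 => exact hσ z₀
  | Int.negSucc (k + 1) =>
    change R (σ^[k + 1 + 1] z₀) (σ^[k + 1] z₀)
    rw [Function.iterate_succ_apply' σ (k + 1)]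
    exact hσ _

namespace RadialData

variable {K : Set (ℝ × ℝ)} {r b b' : ℝ → ℝ} {S : ℝ → ℝ → ℝ} {T : ℝ × ℝ → ℝ × ℝ}

/-- Through every point outside `K` passes a two-sided orbit, and it has a polar lift. -/
lemma exists_orbit (h : RadialData K r b b') (hT : IsOuterBilliard K T) {A₀ : ℝ × ℝ}
    (hA₀ : A₀ ∉ K) :
    ∃ (A : ℤ → ℝ × ℝ) (φ : ℤ → ℝ), A 0 = A₀ ∧ (∀ n, A n ∉ K) ∧ (∀ n, A (n + 1) = T (A n)) ∧
      IsPolarLift A φ := by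
  let α := {p : (ℝ × ℝ) × ℝ // p.1 ∉ K ∧ ∃ ρ > (0:ℝ), p.1 = ρ • uVec p.2}
  let R : α → α → Prop := fun x y => y.1.1 = T x.1.1 ∧ x.1.2 < y.1.2 ∧ y.1.2 < x.1.2 + π
  have hz : ∃ φ, ∃ ρ > (0:ℝ), A₀ = ρ • uVec φ := by
    obtain ⟨ρ, φ, h0, rfl⟩ := exists_polar A₀
    rcases h0.eq_or_lt with e | e
    · exfalso; apply hA₀; rw [← e, zero_smul]; exact h.zero_mem_K
    · exact ⟨φ, ρ, e, rfl⟩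
  obtain ⟨φ₀, hφ₀⟩ := hz
  have hf : ∀ x, ∃ y, R x y := by
    rintro ⟨⟨A, φ⟩, hA, ρ, hρ, e⟩
    obtain ⟨s, t, -, ht, e'⟩ := h.exists_pt (σ := -1) (Or.inr rfl) hA
    rw [neg_one_mul] at e'
    simp only at e e'
    have hTA := h.T_pt hT s ht
    have hd : 0 < detV (ρ • uVec φ) (T A) := by
      rw [← e, e', hTA, detV_pt]
      have := h.rpos s
      have : 0 < t - -t := by linarith
      positivity
    obtain ⟨φ', ρ', h1, h2, h3, h4⟩ := exists_angle_fwd hρ hd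
    refine ⟨⟨(T A, φ'), ?_, ρ', h3, h4⟩, rfl, h1, h2⟩
    rw [e', hTA]; exact h.pt_notMem s ht.ne'
  have hb : ∀ x, ∃ y, R y x := by
    rintro ⟨⟨A, φ⟩, hA, ρ, hρ, e⟩
    obtain ⟨s, t, -, ht, e'⟩ := h.exists_pt (σ := 1) (Or.inl rfl) hA
    rw [one_mul] at e'
    simp only at e e'
    have hTA := h.T_pt hT s ht
    have hd : 0 < detV (pt r b s (-t)) (ρ • uVec φ) := by
      rw [← e, e', detV_pt]
      have := h.rpos s
      have : 0 < t - -t := by linarith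
      positivity
    obtain ⟨φ', ρ', h1, h2, h3, h4⟩ := exists_angle_bwd hρ hd
    refine ⟨⟨(pt r b s (-t), φ'), ?_, ρ', h3, h4⟩, ?_, h1, h2⟩
    · exact h.pt_notMem s (neg_ne_zero.2 ht.ne')
    · simp only [hTA, e']
  obtain ⟨z, hz0, hz⟩ := exists_biSeq R hf hb ⟨(A₀, φ₀), hA₀, hφ₀⟩
  exact ⟨fun n => (z n).1.1, fun n => (z n).1.2, by simp [hz0], fun n => (z n).2.1,
    fun n => (hz n).1, fun n => (z n).2.2, fun n => (hz n).2⟩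

/-- The generating function is dominated by the areas cut by the moving tangent line, when the
endpoints turn by the angles `arctan (ε ξᵢ)`. With equality at `ε = 0`, this replaces the
differentiation of `S`, which is never needed. -/
lemma S_le_cutArea (h : RadialData K r b b') (hS : IsGenFun K S) {x₀ x₁ s t ρ₀ ρ₁ : ℝ}
    (h01 : x₀ < x₁) (h10 : x₁ < x₀ + π) (hρ₀ : 0 < ρ₀) (hρ₁ : 0 < ρ₁)
    (e₀ : pt r b s (-t) = ρ₀ • uVec x₀) (e₁ : pt r b s t = ρ₁ • uVec x₁) (η ξ₀ ξ₁ : ℝ) :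
    ∀ᶠ ε in nhds 0, S (x₀ + arctan (ε * ξ₀)) (x₁ + arctan (ε * ξ₁)) ≤
      cutArea r b s t η ξ₀ ξ₁ ε := by
  have c1 := h.contb; have c2 := h.contr
  have hr := h.rpos s
  have hcont : ∀ (A : ℝ × ℝ) (ξ : ℝ),
      Continuous fun ε => nf r b (s + ε * η) (A + (ε * ξ) • rotJ A) := by
    intro A ξ
    simp only [nf]
    refine (Continuous.div (by fun_prop) (by fun_prop) fun x => (h.rpos _).ne').mul ?_
    fun_prop
  have hpos : ∀ (u ξ : ℝ), ∀ᶠ ε in nhds 0,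
      0 < nf r b (s + ε * η) (pt r b s u + (ε * ξ) • rotJ (pt r b s u)) := by
    intro u ξ
    refine (hcont _ ξ).continuousAt.eventually_const_lt ?_
    simp [nf_pt hr]
  have hlt1 : ∀ᶠ ε in nhds (0:ℝ), x₀ + arctan (ε * ξ₀) < x₁ + arctan (ε * ξ₁) := by
    refine Filter.Tendsto.eventually_lt (y := x₀) (z := x₁) ?_ ?_ h01
    · have : Continuous fun ε => x₀ + arctan (ε * ξ₀) := by fun_prop
      simpa using this.tendsto 0
    · have : Continuous fun ε => x₁ + arctan (ε * ξ₁) := by fun_prop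
      simpa using this.tendsto 0
  have hlt2 : ∀ᶠ ε in nhds (0:ℝ), x₁ + arctan (ε * ξ₁) < x₀ + arctan (ε * ξ₀) + π := by
    refine Filter.Tendsto.eventually_lt (y := x₁) (z := x₀ + π) ?_ ?_ h10
    · have : Continuous fun ε => x₁ + arctan (ε * ξ₁) := by fun_prop
      simpa using this.tendsto 0
    · have : Continuous fun ε => x₀ + arctan (ε * ξ₀) + π := by fun_prop
      simpa using this.tendsto 0
  filter_upwards [hpos (-t) ξ₀, hpos t ξ₁, hlt1, hlt2] with ε h1 h2 h3 h4
  exact h.S_le hS h3 h4 (s := s + ε * η) (by positivity) (by positivity) (rot_polar e₀ _)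
    (rot_polar e₁ _) h1 h2

lemma cutArea_zero (h : RadialData K r b b') (s t η ξ₀ ξ₁ : ℝ) :
    cutArea r b s t η ξ₀ ξ₁ 0 = t * r s ^ 2 := by
  simp only [cutArea, zero_mul, zero_smul, add_zero, nf_pt (h.rpos s), detV_pt]
  ring

/-- The second variation of the action of a locally minimizing orbit is nonnegative. -/
lemma orbit_ineq (h : RadialData K r b b') (hS : IsGenFun K S) {A : ℤ → ℝ × ℝ} {φ : ℤ → ℝ}
    (hφ : IsPolarLift A φ) {s t : ℤ → ℝ} (ht : ∀ n, 0 < t n)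
    (hA₀ : ∀ n, A n = pt r b (s n) (-t n)) (hA₁ : ∀ n, A (n + 1) = pt r b (s n) (t n))
    (hmin : LocMinConfig S φ) (ζ : ℤ → ℝ) (N : ℤ) (hN : 1 ≤ N) :
    let Q := fun i x y => qform (r (s i)) (b (s i)) (1 + b (s i) ^ 2 + b' (s i)) (t i) x y
    0 ≤ Q 0 0 (ζ 1) + ∑ i ∈ Finset.Icc 1 (N - 1), Q i (ζ i) (ζ (i + 1)) + Q N (ζ N) 0 := by
  intro Q
  have hm := hmin 1 N hN
  choose ρ hρ hAρ using hφ.1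
  have hφ2 := hφ.2
  choose η E' hE hE' using fun i x y => h.second_var (s i) (t i) x y (ht i)
  have hle : ∀ i x y, ∀ᶠ ε in nhds 0,
      S (φ i + arctan (ε * x)) (φ (i + 1) + arctan (ε * y)) ≤
        cutArea r b (s i) (t i) (η i x y) x y ε := fun i x y =>
    h.S_le_cutArea hS (hφ2 i).1 (hφ2 i).2 (hρ i) (hρ (i + 1)) (by rw [← hA₀, hAρ])
      (by rw [← hA₁, hAρ]) _ _ _
  have heq : ∀ i, S (φ i) (φ (i + 1)) = t i * r (s i) ^ 2 := fun i =>
    h.S_eq hS (hφ2 i).1 (hφ2 i).2 (hρ i) (hρ (i + 1)) (by rw [← hA₀, hAρ])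
      (by rw [← hA₁, hAρ])
  set C := fun i x y => cutArea r b (s i) (t i) (η i x y) x y with hC
  -- the competitor action, with the same value and a local minimum at `ε = 0`
  have htend : Filter.Tendsto (fun (ε : ℝ) (i : ℤ) => φ i + arctan (ε * ζ i)) (nhds 0)
      (nhds φ) := by
    have : Continuous fun (ε : ℝ) (i : ℤ) => φ i + arctan (ε * ζ i) := by fun_prop
    simpa using this.tendsto 0
  have hev := htend.eventually hm
  have hsum : ∀ᶠ ε in nhds 0, ∀ i ∈ Finset.Icc 1 (N - 1),
      S (φ i + arctan (ε * ζ i)) (φ (i + 1) + arctan (ε * ζ (i + 1))) ≤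
        C i (ζ i) (ζ (i + 1)) ε :=
    (Filter.eventually_all_finset _).2 fun i _ => hle i _ _
  have hlm : IsLocalMin (fun ε => C 0 0 (ζ 1) ε +
      ∑ i ∈ Finset.Icc 1 (N - 1), C i (ζ i) (ζ (i + 1)) ε + C N (ζ N) 0 ε) 0 := by
    filter_upwards [hev, hle 0 0 (ζ 1), hle N (ζ N) 0, hsum] with ε h1 h2 h3 h4
    have h5 := Finset.sum_le_sum h4
    have h6 := heq 0
    simp only [mul_zero, arctan_zero, add_zero, zero_add] at h2 h3 h6
    have h7 : ∀ i x y, C i x y 0 = t i * r (s i) ^ 2 := fun i x y => h.cutArea_zero _ _ _ _ _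
    simp only [h7]
    simp only [sub_self, heq, h6] at h1
    linarith
  refine second_deriv_nonneg (f' := fun ε => E' 0 0 (ζ 1) ε +
      ∑ i ∈ Finset.Icc 1 (N - 1), E' i (ζ i) (ζ (i + 1)) ε + E' N (ζ N) 0 ε) hlm ?_ ?_
  · have hs2 : ∀ᶠ ε in nhds 0, ∀ i ∈ Finset.Icc 1 (N - 1),
        HasDerivAt (C i (ζ i) (ζ (i + 1))) (E' i (ζ i) (ζ (i + 1)) ε) ε :=
      (Filter.eventually_all_finset _).2 fun i _ => hE i _ _
    filter_upwards [hE 0 0 (ζ 1), hE N (ζ N) 0, hs2] with ε h1 h2 h3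
    exact (h1.add (HasDerivAt.fun_sum h3)).add h2
  · exact ((hE' 0 0 (ζ 1)).add (HasDerivAt.fun_sum fun i _ => hE' i _ _)).add (hE' N (ζ N) 0)

end RadialData

/-! ### Area preservation and averaging over orbits -/

/-- The parameter domain of the tangent coordinates. -/
def dom : Set (ℝ × ℝ) := Ico 0 (2 * π) ×ˢ Ioi 0

lemma measurableSet_dom : MeasurableSet dom := measurableSet_Ico.prod measurableSet_Ioi

/-- Tangent coordinates on the complement of `K`: the point `γ(s) + σ t γ'(s)` with `σ = 1` or
`σ = -1`. -/
def tmap (r b : ℝ → ℝ) (σ : ℝ) (p : ℝ × ℝ) : ℝ × ℝ := pt r b p.1 (σ * p.2)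

/-- The derivative of the tangent coordinates. -/
def tmapDeriv (r b b' : ℝ → ℝ) (σ : ℝ) (p : ℝ × ℝ) : ℝ × ℝ →L[ℝ] ℝ × ℝ :=
  (Matrix.toLin (.finTwoProd ℝ) (.finTwoProd ℝ)
    !![r p.1 * (-b p.1 * ((1 - b p.1 * (σ * p.2)) * cos p.1 - σ * p.2 * sin p.1)
          - b' p.1 * (σ * p.2) * cos p.1 - (1 - b p.1 * (σ * p.2)) * sin p.1
          - σ * p.2 * cos p.1),
       r p.1 * (σ * (-b p.1 * cos p.1 - sin p.1));
       r p.1 * (-b p.1 * ((1 - b p.1 * (σ * p.2)) * sin p.1 + σ * p.2 * cos p.1)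
          - b' p.1 * (σ * p.2) * sin p.1 + (1 - b p.1 * (σ * p.2)) * cos p.1
          - σ * p.2 * sin p.1),
       r p.1 * (σ * (-b p.1 * sin p.1 + cos p.1))]).toContinuousLinearMap

/-- The absolute Jacobian determinant of the tangent coordinates, the same for `σ = 1` and `σ = -1`;
this is why the outer billiard map preserves area. -/
def jac (r b b' : ℝ → ℝ) (p : ℝ × ℝ) : ℝ := p.2 * r p.1 ^ 2 * (1 + b p.1 ^ 2 + b' p.1)

/-- The inverse of the tangent coordinates with `σ = -1`. -/
def tinv (r b : ℝ → ℝ) : ℝ × ℝ → ℝ × ℝ := Function.invFunOn (tmap r b (-1)) dom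

/-- The quadratic form of the second variation at tangent parameters `p`. -/
def qf (r b b' : ℝ → ℝ) (p : ℝ × ℝ) (x y : ℝ) : ℝ :=
  qform (r p.1) (b p.1) (1 + b p.1 ^ 2 + b' p.1) p.2 x y

lemma det_tmapDeriv (r b b' : ℝ → ℝ) {σ : ℝ} (hσ : σ = 1 ∨ σ = -1) (p : ℝ × ℝ) :
    (tmapDeriv r b b' σ p).det = - jac r b b' p := by
  unfold tmapDeriv jac
  simp only [LinearMap.det_toContinuousLinearMap, LinearMap.det_toLin, Matrix.det_fin_two_of]
  have hsc := Real.sin_sq_add_cos_sq p.1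
  rcases hσ with rfl | rfl
  · linear_combination (-(p.2 * r p.1 ^ 2 * (1 + b p.1 ^ 2 + b' p.1))) * hsc
  · linear_combination (-(p.2 * r p.1 ^ 2 * (1 + b p.1 ^ 2 + b' p.1))) * hsc

namespace RadialData

variable {K : Set (ℝ × ℝ)} {r b b' : ℝ → ℝ} {S : ℝ → ℝ → ℝ} {T : ℝ × ℝ → ℝ × ℝ}

lemma hasFDerivAt_tmap (h : RadialData K r b b') (σ : ℝ) (p : ℝ × ℝ) :
    HasFDerivAt (tmap r b σ) (tmapDeriv r b b' σ p) p := by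
  have hc := Real.hasDerivAt_cos p.1
  have hs := Real.hasDerivAt_sin p.1
  have hr := h.hr p.1
  have hb := h.hb p.1
  have d1 : HasFDerivAt (Prod.fst : ℝ × ℝ → ℝ) (ContinuousLinearMap.fst ℝ ℝ ℝ) p := hasFDerivAt_fst
  have d2 : HasFDerivAt (Prod.snd : ℝ × ℝ → ℝ) (ContinuousLinearMap.snd ℝ ℝ ℝ) p := hasFDerivAt_snd
  have h1 := ((hr.mul hc).comp_hasFDerivAt p d1).add
    ((d2.const_mul σ).mul
      ((hr.mul ((hb.neg.mul hc).sub hs)).comp_hasFDerivAt p d1))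
  have h2 := ((hr.mul hs).comp_hasFDerivAt p d1).add
    ((d2.const_mul σ).mul
      ((hr.mul ((hb.neg.mul hs).add hc)).comp_hasFDerivAt p d1))
  refine HasFDerivAt.congr_of_eventuallyEq (HasFDerivAt.congr_fderiv (h1.prodMk h2) ?_)
    (Filter.Eventually.of_forall fun x => ?_)
  · unfold tmapDeriv
    rw [Matrix.toLin_finTwoProd_toContinuousLinearMap]
    ext <;> simp <;> ring
  · simp only [tmap, pt]
    ext <;> simp <;> ring

lemma injOn_tmap (h : RadialData K r b b') {σ : ℝ} (hσ : σ = 1 ∨ σ = -1) :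
    InjOn (tmap r b σ) dom := by
  rintro ⟨s, t⟩ ⟨hs, ht⟩ ⟨s', t'⟩ ⟨hs', ht'⟩ e
  obtain ⟨h1, h2⟩ := h.pt_inj hσ hs hs' ht ht' e
  simp_all

lemma image_tmap (h : RadialData K r b b') {σ : ℝ} (hσ : σ = 1 ∨ σ = -1) :
    tmap r b σ '' dom = Kᶜ := by
  ext A
  constructor
  · rintro ⟨⟨s, t⟩, ⟨hs, ht⟩, rfl⟩
    refine h.pt_notMem s (mul_ne_zero ?_ (ne_of_gt ht))
    rcases hσ with rfl | rfl <;> norm_num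
  · intro hA
    obtain ⟨s, t, hs, ht, rfl⟩ := h.exists_pt hσ hA
    exact ⟨(s, t), ⟨hs, ht⟩, rfl⟩

lemma jac_pos (h : RadialData K r b b') {p : ℝ × ℝ} (hp : p ∈ dom) : 0 < jac r b b' p := by
  have h1 := h.rpos p.1; have h2 := h.Ppos p.1; have h3 : 0 < p.2 := hp.2
  unfold jac; positivity

lemma abs_det (h : RadialData K r b b') {σ : ℝ} (hσ : σ = 1 ∨ σ = -1) {p : ℝ × ℝ}
    (hp : p ∈ dom) : |(tmapDeriv r b b' σ p).det| = jac r b b' p := by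
  rw [det_tmapDeriv _ _ _ hσ, abs_neg, abs_of_pos (h.jac_pos hp)]

lemma integral_compl (h : RadialData K r b b') {σ : ℝ} (hσ : σ = 1 ∨ σ = -1)
    (F : ℝ × ℝ → ℝ) : ∫ x in Kᶜ, F x = ∫ p in dom, jac r b b' p * F (tmap r b σ p) := by
  rw [← h.image_tmap hσ, integral_image_eq_integral_abs_det_fderiv_smul volume measurableSet_dom
    (fun x _ => (h.hasFDerivAt_tmap σ x).hasFDerivWithinAt) (h.injOn_tmap hσ)]
  refine setIntegral_congr_fun measurableSet_dom fun p hp => ?_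
  simp only [h.abs_det hσ hp, smul_eq_mul]

lemma integrableOn_compl (h : RadialData K r b b') {σ : ℝ} (hσ : σ = 1 ∨ σ = -1)
    (F : ℝ × ℝ → ℝ) : IntegrableOn F Kᶜ ↔
      IntegrableOn (fun p => jac r b b' p * F (tmap r b σ p)) dom := by
  rw [← h.image_tmap hσ, integrableOn_image_iff_integrableOn_abs_det_fderiv_smul volume
    measurableSet_dom (fun x _ => (h.hasFDerivAt_tmap σ x).hasFDerivWithinAt) (h.injOn_tmap hσ)]
  refine integrableOn_congr_fun (fun p hp => ?_) measurableSet_dom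
  simp only [h.abs_det hσ hp, smul_eq_mul]

lemma T_tmap (h : RadialData K r b b') (hT : IsOuterBilliard K T) {p : ℝ × ℝ} (hp : p ∈ dom) :
    T (tmap r b (-1) p) = tmap r b 1 p := by
  simp only [tmap, neg_one_mul, one_mul]
  exact h.T_pt hT p.1 hp.2

/-- The outer billiard map preserves area. -/
lemma integral_comp_T (h : RadialData K r b b') (hT : IsOuterBilliard K T) (F : ℝ × ℝ → ℝ) :
    ∫ x in Kᶜ, F (T x) = ∫ x in Kᶜ, F x := by
  rw [h.integral_compl (Or.inr rfl), h.integral_compl (Or.inl rfl)]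
  refine setIntegral_congr_fun measurableSet_dom fun p hp => ?_
  simp only [h.T_tmap hT hp]

lemma integrableOn_comp_T (h : RadialData K r b b') (hT : IsOuterBilliard K T)
    {F : ℝ × ℝ → ℝ} (hF : IntegrableOn F Kᶜ) : IntegrableOn (fun x => F (T x)) Kᶜ := by
  rw [h.integrableOn_compl (Or.inl rfl)] at hF
  rw [h.integrableOn_compl (Or.inr rfl)]
  refine (integrableOn_congr_fun (fun p hp => ?_) measurableSet_dom).2 hF
  simp only [h.T_tmap hT hp]

lemma integrableOn_iterate (h : RadialData K r b b') (hT : IsOuterBilliard K T)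
    {F : ℝ × ℝ → ℝ} (hF : IntegrableOn F Kᶜ) (k : ℕ) :
    IntegrableOn (fun x => F (T^[k] x)) Kᶜ := by
  induction k with
  | zero => exact hF
  | succ k ih => exact h.integrableOn_comp_T hT ih

lemma integral_iterate (h : RadialData K r b b') (hT : IsOuterBilliard K T)
    (F : ℝ × ℝ → ℝ) (k : ℕ) : ∫ x in Kᶜ, F (T^[k] x) = ∫ x in Kᶜ, F x := by
  induction k with
  | zero => rfl
  | succ k ih => exact (h.integral_comp_T hT fun x => F (T^[k] x)).trans ih

lemma tinv_spec (h : RadialData K r b b') {A : ℝ × ℝ} (hA : A ∉ K) :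
    tinv r b A ∈ dom ∧ tmap r b (-1) (tinv r b A) = A := by
  have : A ∈ tmap r b (-1) '' dom := by rw [h.image_tmap (Or.inr rfl)]; exact hA
  exact ⟨Function.invFunOn_mem this, Function.invFunOn_eq this⟩

lemma tinv_tmap (h : RadialData K r b b') {p : ℝ × ℝ} (hp : p ∈ dom) :
    tinv r b (tmap r b (-1) p) = p :=
  (h.injOn_tmap (Or.inr rfl)).leftInvOn_invFunOn hp

/-- The second variation of an orbit segment with vertices `0, …, n + 2`: the two ends are fixed
and the `n + 1` inner vertices are varied by the angles `f`. -/
lemma pointwise (h : RadialData K r b b') (hT : IsOuterBilliard K T) (hS : IsGenFun K S)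
    (hmin : AllOrbitsLocMin K T S) (f : ℝ × ℝ → ℝ) (n : ℕ) {A₀ : ℝ × ℝ} (hA₀ : A₀ ∉ K) :
    0 ≤ (fun A => qf r b b' (tinv r b A) 0 (f (T A))) A₀ +
      ∑ k ∈ Finset.range n, (fun A => qf r b b' (tinv r b A) (f A) (f (T A))) (T^[k + 1] A₀) +
      (fun A => qf r b b' (tinv r b A) (f A) 0) (T^[n + 1] A₀) := by
  obtain ⟨A, φ, hA0, hAK, hAT, hφ⟩ := h.exists_orbit hT hA₀
  have hdom := fun i => (h.tinv_spec (hAK i)).1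
  have hpt := fun i => (h.tinv_spec (hAK i)).2
  have key := h.orbit_ineq hS hφ (s := fun i => (tinv r b (A i)).1)
    (t := fun i => (tinv r b (A i)).2) (fun i => (hdom i).2)
    (fun i => by
      have := hpt i
      simp only [tmap, neg_one_mul] at this
      exact this.symm)
    (fun i => by
      have := h.T_tmap hT (hdom i)
      rw [hpt i, ← hAT] at this
      simpa only [tmap, one_mul] using this)
    (hmin A hAK hAT φ hφ) (fun i => f (A i)) (n + 1) (by omega)
  have hiter : ∀ k : ℕ, A k = T^[k] A₀ := by
    intro k
    induction k with
    | zero => simpa using hA0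
    | succ k ih => rw [Function.iterate_succ_apply', ← ih, ← hAT]; push_cast; rfl
  have hsum : ∑ i ∈ Finset.Icc (1:ℤ) n, qf r b b' (tinv r b (A i)) (f (A i)) (f (T (A i))) =
      ∑ k ∈ Finset.range n, qf r b b' (tinv r b (T^[k + 1] A₀)) (f (T^[k + 1] A₀))
        (f (T (T^[k + 1] A₀))) := by
    refine Finset.sum_nbij' (fun i => (i - 1).toNat) (fun k => (k:ℤ) + 1) ?_ ?_ ?_ ?_ ?_
    · intro i hi; simp only [Finset.mem_Icc, Finset.mem_range] at hi ⊢; omega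
    · intro i hi; simp only [Finset.mem_Icc, Finset.mem_range] at hi ⊢; omega
    · intro i hi; simp only [Finset.mem_Icc] at hi; omega
    · intro i hi; omega
    · intro i hi
      simp only [Finset.mem_Icc] at hi
      have e : A i = T^[(i - 1).toNat + 1] A₀ := by
        rw [← hiter]; congr 1; omega
      rw [e]
  have e1 : A 1 = T A₀ := by rw [← hA0, ← hAT]; rfl
  have e2 : A (n + 1) = T^[n + 1] A₀ := by rw [← hiter]; push_cast; rfl
  simp only [add_sub_cancel_right] at key
  rw [e1, e2, hA0] at key
  simp only [hAT] at key
  rw [← hsum]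
  exact key

/-- Integrating the second variation over all orbits, area preservation turns every interior term
into the same integral; the two boundary terms do not depend on the length of the orbit segment and
are negligible for long ones. -/
lemma integral_nonneg_of_locMin (h : RadialData K r b b') (hT : IsOuterBilliard K T)
    (hS : IsGenFun K S) (hmin : AllOrbitsLocMin K T S) (f : ℝ × ℝ → ℝ)
    (i1 : IntegrableOn (fun p => jac r b b' p * qf r b b' p 0 (f (tmap r b 1 p))) dom)
    (i2 : IntegrableOn
      (fun p => jac r b b' p * qf r b b' p (f (tmap r b (-1) p)) (f (tmap r b 1 p))) dom)
    (i3 : IntegrableOn (fun p => jac r b b' p * qf r b b' p (f (tmap r b (-1) p)) 0) dom) :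
    0 ≤ ∫ p in dom,
      jac r b b' p * qf r b b' p (f (tmap r b (-1) p)) (f (tmap r b 1 p)) := by
  set G1 := fun A => qf r b b' (tinv r b A) 0 (f (T A)) with hG1
  set G2 := fun A => qf r b b' (tinv r b A) (f A) (f (T A)) with hG2
  set G3 := fun A => qf r b b' (tinv r b A) (f A) 0 with hG3
  have j1 : IntegrableOn G1 Kᶜ := by
    rw [h.integrableOn_compl (Or.inr rfl)]
    refine (integrableOn_congr_fun (fun p hp => ?_) measurableSet_dom).2 i1
    simp only [hG1, h.T_tmap hT hp, h.tinv_tmap hp]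
  have j2 : IntegrableOn G2 Kᶜ := by
    rw [h.integrableOn_compl (Or.inr rfl)]
    refine (integrableOn_congr_fun (fun p hp => ?_) measurableSet_dom).2 i2
    simp only [hG2, h.T_tmap hT hp, h.tinv_tmap hp]
  have j3 : IntegrableOn G3 Kᶜ := by
    rw [h.integrableOn_compl (Or.inr rfl)]
    refine (integrableOn_congr_fun (fun p hp => ?_) measurableSet_dom).2 i3
    simp only [hG3, h.tinv_tmap hp]
  have e2 : ∫ x in Kᶜ, G2 x = ∫ p in dom,
      jac r b b' p * qf r b b' p (f (tmap r b (-1) p)) (f (tmap r b 1 p)) := by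
    rw [h.integral_compl (Or.inr rfl)]
    refine setIntegral_congr_fun measurableSet_dom fun p hp => ?_
    simp only [hG2, h.T_tmap hT hp, h.tinv_tmap hp]
  rw [← e2]
  have key : ∀ n : ℕ, 0 ≤ (∫ x in Kᶜ, G1 x) + n * (∫ x in Kᶜ, G2 x) + ∫ x in Kᶜ, G3 x := by
    intro n
    have hK : MeasurableSet Kᶜ := h.comp.isClosed.measurableSet.compl
    have hp : 0 ≤ ∫ x in Kᶜ, (G1 x + ∑ k ∈ Finset.range n, G2 (T^[k + 1] x) +
        G3 (T^[n + 1] x)) :=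
      setIntegral_nonneg hK fun x hx => h.pointwise hT hS hmin f n hx
    have k2 : Integrable (fun x => ∑ k ∈ Finset.range n, G2 (T^[k + 1] x))
        (volume.restrict Kᶜ) :=
      integrable_finsetSum _ fun k _ => h.integrableOn_iterate hT j2 (k + 1)
    have k12 : Integrable (fun x => G1 x + ∑ k ∈ Finset.range n, G2 (T^[k + 1] x))
        (volume.restrict Kᶜ) := j1.add k2
    rw [integral_add k12 (h.integrableOn_iterate hT j3 (n + 1)), integral_add j1 k2,
      integral_finsetSum _ fun k _ => h.integrableOn_iterate hT j2 (k + 1)] at hp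
    simp only [h.integral_iterate hT] at hp
    simpa using hp
  by_contra! hneg
  obtain ⟨n, hn⟩ := exists_nat_gt
    (((∫ x in Kᶜ, G1 x) + ∫ x in Kᶜ, G3 x) / (-(∫ x in Kᶜ, G2 x)))
  rw [div_lt_iff₀ (by linarith)] at hn
  linarith [key n]

end RadialData

/-! ### The averaged density and its bounds -/

/-- The angular variation of a vertex: `|A|⁻²`, damped at infinity by the parameter `e > 0`. -/
def ang (e : ℝ) (A : ℝ × ℝ) : ℝ := 1 / ((A.1 ^ 2 + A.2 ^ 2) * (1 + e * (A.1 ^ 2 + A.2 ^ 2)))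

/-- The damping factor at a point of squared length `R² Y`. -/
def damp (e R Y : ℝ) : ℝ := 1 / (1 + e * R ^ 2 * Y)

/-- The density of the averaged second variation for the angular variation `ang e`, in tangent
coordinates; `e = 0` is the limiting density. -/
def dens (R β P e t : ℝ) : ℝ :=
  P * ((damp e R (yq β t) - damp e R (yq β (-t))) ^ 2 / 2
    + (damp e R (yq β (-t)) + damp e R (yq β t)) ^ 2 / (2 * (1 + P * t ^ 2))
    - (1 - β * t) / yq β t * damp e R (yq β t) ^ 2
    - (1 + β * t) / yq β (-t) * damp e R (yq β (-t)) ^ 2)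

lemma yq_lower (β t : ℝ) : 1 + t ^ 2 ≤ (2 + 2 * β ^ 2) * yq β t := by
  unfold yq
  nlinarith [sq_nonneg (1 - 2 * β * t), sq_nonneg (β * (1 - β * t)), sq_nonneg t]

lemma yq_pos (β t : ℝ) : 0 < yq β t := by
  have h1 := yq_lower β t
  have h2 : 0 < 1 + t ^ 2 := by positivity
  exact pos_of_mul_pos_right (h2.trans_le h1) (by positivity)

lemma inv_yq_le {β B : ℝ} (hB : |β| ≤ B) (t : ℝ) : 1 / yq β t ≤ (2 + 2 * B ^ 2) / (1 + t ^ 2) := by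
  have h1 := yq_lower β t
  have h2 := yq_pos β t
  have h3 : β ^ 2 ≤ B ^ 2 := sq_le_sq' (abs_le.1 hB).1 (abs_le.1 hB).2
  rw [div_le_div_iff₀ h2 (by positivity)]
  nlinarith

lemma damp_pos {e R Y : ℝ} (he : 0 ≤ e) (hY : 0 < Y) : 0 < damp e R Y := by
  unfold damp; positivity

lemma damp_le_one {e R Y : ℝ} (he : 0 ≤ e) (hY : 0 < Y) : damp e R Y ≤ 1 := by
  unfold damp
  rw [div_le_one (by positivity)]
  have : 0 ≤ e * R ^ 2 * Y := by positivity
  linarith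

/-- The damping factors at the two ends of a tangent segment differ by `O(1 / t)`, uniformly in the
damping parameter. -/
lemma abs_damp_sub_le {e R β B t : ℝ} (he : 0 ≤ e) (hB : |β| ≤ B) (ht : 0 ≤ t) :
    |damp e R (yq β t) - damp e R (yq β (-t))| ≤ 4 * B * (2 + 2 * B ^ 2) * t / (1 + t ^ 2) := by
  have hB0 : 0 ≤ B := (abs_nonneg β).trans hB
  have h1 := yq_pos β t
  have h0 := yq_pos β (-t)
  have g0 := damp_pos (R := R) he h0
  have g0' := damp_le_one (R := R) he h0
  have g1 := damp_pos (R := R) he h1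
  have e1 : damp e R (yq β t) - damp e R (yq β (-t)) =
      4 * β * t * (e * R ^ 2 * damp e R (yq β t)) * damp e R (yq β (-t)) := by
    have a1 : 1 + e * R ^ 2 * yq β t ≠ 0 := by positivity
    have a0 : 1 + e * R ^ 2 * yq β (-t) ≠ 0 := by positivity
    have e0 : yq β (-t) = yq β t + 4 * β * t := by unfold yq; ring
    unfold damp
    field_simp
    rw [e0]; ring
  have e2 : e * R ^ 2 * damp e R (yq β t) ≤ 1 / yq β t := by
    unfold damp
    rw [mul_one_div, div_le_div_iff₀ (by positivity) h1]
    linarith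
  have e3 := e2.trans (inv_yq_le hB t)
  rw [e1, abs_mul, abs_mul, abs_mul, abs_mul, abs_of_nonneg ht, abs_of_pos g0,
    abs_of_nonneg (by positivity : 0 ≤ e * R ^ 2 * damp e R (yq β t)),
    abs_of_pos (by norm_num : (0:ℝ) < 4)]
  calc 4 * |β| * t * (e * R ^ 2 * damp e R (yq β t)) * damp e R (yq β (-t))
      ≤ 4 * B * t * ((2 + 2 * B ^ 2) / (1 + t ^ 2)) * 1 := by gcongr
    _ = _ := by ring

lemma abs_one_sub_mul_le {β B t : ℝ} (hB : |β| ≤ B) (ht : 0 ≤ t) :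
    |1 - β * t| ≤ 1 + B * t := by
  have := abs_le.1 hB
  rw [abs_le]
  constructor <;> nlinarith

/-- An integrable bound for the density, uniform in the damping parameter. -/
lemma abs_dens_le {R β P B M e t : ℝ} (he : 0 ≤ e) (hP : 0 < P) (hPM : P ≤ M) (hB : |β| ≤ B)
    (ht : 0 ≤ t) : |dens R β P e t| ≤
      (M * (8 * B ^ 2 * (2 + 2 * B ^ 2) ^ 2 + (2 + 2 * B ^ 2) ^ 3 +
        8 * B * (1 + B) * (2 + 2 * B ^ 2) ^ 2) + 2 * (1 + M)) * (1 + t ^ 2)⁻¹ := by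
  have hB0 : 0 ≤ B := (abs_nonneg β).trans hB
  have hM0 : 0 ≤ M := hP.le.trans hPM
  have h1 := yq_pos β t
  have h0 := yq_pos β (-t)
  have g0 := damp_pos (R := R) he h0
  have g0' := damp_le_one (R := R) he h0
  have g1 := damp_pos (R := R) he h1
  have g1' := damp_le_one (R := R) he h1
  have i1 := inv_yq_le hB t
  have i0 := inv_yq_le hB (-t)
  have hd := abs_damp_sub_le (R := R) he hB ht
  have hv := abs_one_sub_mul_le hB ht
  rw [neg_sq] at i0
  have hb2 : β ^ 2 ≤ B ^ 2 := sq_le_sq' (abs_le.1 hB).1 (abs_le.1 hB).2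
  set c := 2 + 2 * B ^ 2 with hc
  have hc0 : 0 < c := by positivity
  set q := (1 + t ^ 2)⁻¹ with hq
  have hqpos : 0 < q := by positivity
  have hq1 : (1 + t ^ 2) * q = 1 := mul_inv_cancel₀ (by positivity)
  set Y1 := yq β t with hY1
  set Y0 := yq β (-t) with hY0
  set G1 := damp e R Y1
  set G0 := damp e R Y0
  rw [div_eq_mul_inv c, ← hq] at i1 i0
  rw [div_eq_mul_inv, ← hq] at hd
  have ht2 : t ^ 2 * q ≤ 1 := by linarith
  have htt : t ≤ 1 + t ^ 2 := by nlinarith [sq_nonneg (t - 1 / 2)]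
  -- the four contributions
  have T1 : (G1 - G0) ^ 2 / 2 ≤ 8 * B ^ 2 * c ^ 2 * q := by
    have : (G1 - G0) ^ 2 ≤ (4 * B * c * t * q) ^ 2 := by
      rw [← sq_abs]; exact pow_le_pow_left₀ (abs_nonneg _) hd 2
    have e1 : (4 * B * c * t * q) ^ 2 = 16 * B ^ 2 * c ^ 2 * q * (t ^ 2 * q) := by ring
    have e2 : 16 * B ^ 2 * c ^ 2 * q * (t ^ 2 * q) ≤ 16 * B ^ 2 * c ^ 2 * q * 1 := by gcongr
    linarith
  have T2 : P * ((G0 + G1) ^ 2 / (2 * (1 + P * t ^ 2))) ≤ 2 * (1 + M) * q := by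
    have a : (G0 + G1) ^ 2 ≤ 4 := by
      calc (G0 + G1) ^ 2 ≤ (1 + 1) ^ 2 := by gcongr
        _ = 4 := by norm_num
    rw [hq, ← div_eq_mul_inv, mul_div_assoc', div_le_div_iff₀ (by positivity) (by positivity)]
    have b1 : P * (G0 + G1) ^ 2 * (1 + t ^ 2) ≤ P * 4 * (1 + t ^ 2) := by gcongr
    have b2 : P * (1 + t ^ 2) ≤ (1 + M) * (1 + P * t ^ 2) := by
      have : 0 ≤ M * (P * t ^ 2) := by positivity
      linarith
    linarith
  have T3 : |(1 - β * t) / Y1 + (1 + β * t) / Y0| ≤ c ^ 3 * q := by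
    have e1 : (1 - β * t) / Y1 + (1 + β * t) / Y0 =
        (2 + 2 * t ^ 2 - 2 * β ^ 2 * t ^ 2) * ((1 / Y1) * (1 / Y0)) := by
      rw [div_add_div _ _ h1.ne' h0.ne', one_div_mul_one_div, mul_one_div]
      congr 1
      rw [hY1, hY0]; unfold yq; ring
    have e2 : |2 + 2 * t ^ 2 - 2 * β ^ 2 * t ^ 2| ≤ c * (1 + t ^ 2) := by
      have u1 := mul_le_mul_of_nonneg_right hb2 (sq_nonneg t)
      have u2 : 0 ≤ β ^ 2 * t ^ 2 := by positivity
      have u3 := sq_nonneg B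
      have u4 := sq_nonneg t
      rw [abs_le, hc]
      constructor <;> linarith
    rw [e1, abs_mul, abs_of_pos (by positivity : 0 < (1 / Y1) * (1 / Y0))]
    calc _ ≤ (c * (1 + t ^ 2)) * ((c * q) * (c * q)) := by gcongr
      _ = c ^ 3 * q * ((1 + t ^ 2) * q) := by ring
      _ = c ^ 3 * q := by rw [hq1, mul_one]
  have T4 : |(1 - β * t) / Y1 * (G1 ^ 2 - G0 ^ 2)| ≤ 8 * B * (1 + B) * c ^ 2 * q := by
    have e1 : (1 - β * t) / Y1 * (G1 ^ 2 - G0 ^ 2) =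
      (1 - β * t) * (1 / Y1) * ((G1 - G0) * (G1 + G0)) := by ring
    rw [e1, abs_mul, abs_mul, abs_mul, abs_of_pos (by positivity : 0 < 1 / Y1),
      abs_of_pos (by positivity : 0 < G1 + G0)]
    have e2 : (1 + B * t) * t ≤ (1 + B) * (1 + t ^ 2) := by linarith
    calc _ ≤ (1 + B * t) * (c * q) * ((4 * B * c * t * q) * (1 + 1)) := by gcongr
      _ = 8 * B * c ^ 2 * q * q * ((1 + B * t) * t) := by ring
      _ ≤ 8 * B * c ^ 2 * q * q * ((1 + B) * (1 + t ^ 2)) := by gcongr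
      _ = 8 * B * (1 + B) * c ^ 2 * q * ((1 + t ^ 2) * q) := by ring
      _ = _ := by rw [hq1, mul_one]
  have T3' : |((1 - β * t) / Y1 + (1 + β * t) / Y0) * G0 ^ 2| ≤ c ^ 3 * q := by
    rw [abs_mul, abs_of_nonneg (sq_nonneg G0)]
    calc _ ≤ c ^ 3 * q * 1 := by
          gcongr
          exact pow_le_one₀ g0.le g0'
      _ = _ := mul_one _
  have e : dens R β P e t = P * ((G1 - G0) ^ 2 / 2
      - ((1 - β * t) / Y1 + (1 + β * t) / Y0) * G0 ^ 2 - (1 - β * t) / Y1 * (G1 ^ 2 - G0 ^ 2))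
      + P * ((G0 + G1) ^ 2 / (2 * (1 + P * t ^ 2))) := by
    unfold dens; ring
  have T5 : 0 ≤ P * ((G0 + G1) ^ 2 / (2 * (1 + P * t ^ 2))) := by positivity
  have T6 : |(G1 - G0) ^ 2 / 2 - ((1 - β * t) / Y1 + (1 + β * t) / Y0) * G0 ^ 2
      - (1 - β * t) / Y1 * (G1 ^ 2 - G0 ^ 2)| ≤
      8 * B ^ 2 * c ^ 2 * q + c ^ 3 * q + 8 * B * (1 + B) * c ^ 2 * q := by
    refine (abs_sub _ _).trans (add_le_add ((abs_sub _ _).trans (add_le_add ?_ T3')) T4)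
    rwa [abs_of_nonneg (by positivity)]
  rw [e]
  refine (abs_add_le _ _).trans ?_
  rw [abs_of_nonneg T5, abs_mul, abs_of_pos hP]
  calc _ ≤ M * (8 * B ^ 2 * c ^ 2 * q + c ^ 3 * q + 8 * B * (1 + B) * c ^ 2 * q) +
        2 * (1 + M) * q := by gcongr
    _ = _ := by ring

/-- An integrable bound, for positive damping, of the boundary terms of the second variation. -/
lemma abs_end_le {R β P B M m e t : ℝ} (he : 0 < e) (hP : 0 < P) (hPM : P ≤ M) (hB : |β| ≤ B)
    (hm : 0 < m) (hR : m ≤ R) (ht : 0 ≤ t) :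
    |P * ((1 - (1 - β * t) / yq β t) - t ^ 2 * P / (2 * (1 + t ^ 2 * P))) *
        damp e R (yq β t) ^ 2| ≤
      M * (2 + (1 + B) * (2 + 2 * B ^ 2)) * ((2 + 2 * B ^ 2) / (e * m ^ 2)) * (1 + t ^ 2)⁻¹ := by
  have hM0 : 0 ≤ M := hP.le.trans hPM
  have hB0 : 0 ≤ B := (abs_nonneg β).trans hB
  have h1 := yq_pos β t
  have g1 := damp_pos (R := R) he.le h1
  have g1' := damp_le_one (R := R) he.le h1
  have i1 := inv_yq_le hB t
  have hv := abs_one_sub_mul_le hB ht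
  set c := 2 + 2 * B ^ 2 with hc
  have hc0 : 0 < c := by positivity
  have a1 : |(1 - β * t) / yq β t| ≤ (1 + B) * c := by
    rw [div_eq_mul_one_div, abs_mul, abs_of_pos (by positivity : 0 < 1 / yq β t)]
    have : 1 + B * t ≤ (1 + B) * (1 + t ^ 2) := by nlinarith [sq_nonneg (t - 1 / 2)]
    calc _ ≤ (1 + B) * (1 + t ^ 2) * (c / (1 + t ^ 2)) := by gcongr; exact hv.trans this
      _ = _ := by field_simp
  have a2 : |t ^ 2 * P / (2 * (1 + t ^ 2 * P))| ≤ 1 := by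
    rw [abs_of_nonneg (by positivity), div_le_one (by positivity)]
    have : 0 ≤ t ^ 2 * P := by positivity
    linarith
  have a3 : |(1 - (1 - β * t) / yq β t) - t ^ 2 * P / (2 * (1 + t ^ 2 * P))| ≤
      2 + (1 + B) * c := by
    refine (abs_sub _ _).trans ?_
    have := abs_sub 1 ((1 - β * t) / yq β t)
    rw [abs_one] at this
    linarith
  have a4 : damp e R (yq β t) ^ 2 ≤ c / (e * m ^ 2) * (1 + t ^ 2)⁻¹ := by
    calc damp e R (yq β t) ^ 2 ≤ damp e R (yq β t) := by nlinarith
      _ ≤ 1 / (e * m ^ 2) * (1 / yq β t) := by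
          unfold damp
          rw [one_div_mul_one_div]
          apply one_div_le_one_div_of_le (by positivity)
          have : e * m ^ 2 * yq β t ≤ e * R ^ 2 * yq β t := by gcongr
          linarith
      _ ≤ 1 / (e * m ^ 2) * (c / (1 + t ^ 2)) := by gcongr
      _ = _ := by ring
  rw [abs_mul, abs_mul, abs_of_pos hP, abs_of_nonneg (sq_nonneg (damp e R (yq β t)))]
  calc _ ≤ M * (2 + (1 + B) * c) * (c / (e * m ^ 2) * (1 + t ^ 2)⁻¹) := by gcongr
    _ = _ := by ring

lemma tendsto_damp (R Y : ℝ) :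
    Filter.Tendsto (fun n : ℕ => damp (1 / ((n:ℝ) + 1)) R Y) Filter.atTop (nhds (damp 0 R Y)) := by
  have h1 := tendsto_one_div_add_atTop_nhds_zero_nat (𝕜 := ℝ)
  have h2 : ContinuousAt (fun e => damp e R Y) 0 := by
    unfold damp
    refine ContinuousAt.div (by fun_prop) (by fun_prop) (by simp)
  exact h2.tendsto.comp h1

lemma tendsto_dens (R β P t : ℝ) :
    Filter.Tendsto (fun n : ℕ => dens R β P (1 / ((n:ℝ) + 1)) t) Filter.atTop
      (nhds (dens R β P 0 t)) := by
  have h1 := tendsto_damp R (yq β t)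
  have h0 := tendsto_damp R (yq β (-t))
  unfold dens
  exact (((((h1.sub h0).pow 2).div_const 2).add (((h0.add h1).pow 2).div_const _)).sub
    ((h1.pow 2).const_mul _)).sub ((h0.pow 2).const_mul _) |>.const_mul P

/-! ### The limiting integral -/

/-- `yq` is the squared length of a point of the tangent line, in units of `r²`. -/
lemma normSq_pt (r b : ℝ → ℝ) (s u : ℝ) :
    (pt r b s u).1 ^ 2 + (pt r b s u).2 ^ 2 = r s ^ 2 * yq (b s) u := by
  have h := Real.sin_sq_add_cos_sq s
  simp only [pt, yq]
  linear_combination r s ^ 2 * (u ^ 2 + (1 - b s * u) ^ 2) * h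

lemma integrableOn_dom_inv (C : ℝ) :
    IntegrableOn (fun p : ℝ × ℝ => C * (1 + p.2 ^ 2)⁻¹) dom := by
  unfold dom IntegrableOn
  rw [Measure.volume_eq_prod, ← Measure.prod_restrict]
  exact Integrable.mul_prod (f := fun _ : ℝ => C) (g := fun t : ℝ => (1 + t ^ 2)⁻¹)
    (integrable_const C) integrable_inv_one_add_sq.restrict

namespace RadialData

variable {K : Set (ℝ × ℝ)} {r b b' : ℝ → ℝ} {S : ℝ → ℝ → ℝ} {T : ℝ × ℝ → ℝ × ℝ}

/-- The density `dens` is the Jacobian times the second variation. -/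
lemma jac_qf (h : RadialData K r b b') {e : ℝ} (he : 0 ≤ e) (p : ℝ × ℝ) :
    jac r b b' p * qf r b b' p (ang e (tmap r b (-1) p)) (ang e (tmap r b 1 p)) =
      dens (r p.1) (b p.1) (1 + b p.1 ^ 2 + b' p.1) e p.2 := by
  have hr := h.rpos p.1
  have hP := h.Ppos p.1
  unfold jac qf ang tmap dens damp
  rw [normSq_pt, normSq_pt, one_mul, neg_one_mul]
  set P := 1 + b p.1 ^ 2 + b' p.1
  have h1 := yq_pos (b p.1) p.2
  have h0 := yq_pos (b p.1) (-p.2)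
  have e1 : 0 < 1 + e * (r p.1 ^ 2 * yq (b p.1) p.2) := by positivity
  have e0 : 0 < 1 + e * (r p.1 ^ 2 * yq (b p.1) (-p.2)) := by positivity
  have e2 : 0 < 1 + P * p.2 ^ 2 := by positivity
  rw [mul_assoc e, mul_assoc e]
  -- in terms of `yq`, the identity becomes rational in independent variables
  have k1 : 1 - b p.1 * p.2 = yq (b p.1) p.2 - ((1 + b p.1 ^ 2) * p.2 - b p.1) * p.2 := by
    unfold yq; ring
  have k0 : 1 + b p.1 * p.2 = yq (b p.1) (-p.2) - ((1 + b p.1 ^ 2) * p.2 + b p.1) * p.2 := by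
    unfold yq; ring
  rw [k1, k0]
  unfold qform
  generalize yq (b p.1) p.2 = Y1 at *
  generalize yq (b p.1) (-p.2) = Y0 at *
  generalize 1 + e * (r p.1 ^ 2 * Y1) = E1 at *
  generalize 1 + e * (r p.1 ^ 2 * Y0) = E0 at *
  have e3 : 1 + p.2 ^ 2 * P ≠ 0 := by rw [mul_comm]; exact e2.ne'
  field_simp
  ring

/-- The boundary term of the averaged second variation at the fixed initial vertex. -/
lemma jac_qf_fst (h : RadialData K r b b') {e : ℝ} (he : 0 ≤ e) (p : ℝ × ℝ) :
    jac r b b' p * qf r b b' p 0 (ang e (tmap r b 1 p)) =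
      (1 + b p.1 ^ 2 + b' p.1) * ((1 - (1 - b p.1 * p.2) / yq (b p.1) p.2) -
        p.2 ^ 2 * (1 + b p.1 ^ 2 + b' p.1) / (2 * (1 + p.2 ^ 2 * (1 + b p.1 ^ 2 + b' p.1)))) *
        damp e (r p.1) (yq (b p.1) p.2) ^ 2 := by
  have hr := h.rpos p.1
  have hP := h.Ppos p.1
  unfold jac qf ang tmap damp
  rw [normSq_pt, one_mul]
  set P := 1 + b p.1 ^ 2 + b' p.1
  have h1 := yq_pos (b p.1) p.2
  have e1 : 0 < 1 + e * (r p.1 ^ 2 * yq (b p.1) p.2) := by positivity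
  have e3 : 0 < 1 + p.2 ^ 2 * P := by positivity
  rw [mul_assoc e]
  have k1 : 1 - b p.1 * p.2 = yq (b p.1) p.2 - ((1 + b p.1 ^ 2) * p.2 - b p.1) * p.2 := by
    unfold yq; ring
  rw [k1]
  unfold qform
  generalize yq (b p.1) p.2 = Y1 at *
  generalize 1 + e * (r p.1 ^ 2 * Y1) = E1 at *
  field_simp
  ring

/-- The boundary term of the averaged second variation at the fixed final vertex. -/
lemma jac_qf_snd (h : RadialData K r b b') {e : ℝ} (he : 0 ≤ e) (p : ℝ × ℝ) :
    jac r b b' p * qf r b b' p (ang e (tmap r b (-1) p)) 0 =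
      (1 + b p.1 ^ 2 + b' p.1) * ((1 - (1 - -b p.1 * p.2) / yq (-b p.1) p.2) -
        p.2 ^ 2 * (1 + b p.1 ^ 2 + b' p.1) / (2 * (1 + p.2 ^ 2 * (1 + b p.1 ^ 2 + b' p.1)))) *
        damp e (r p.1) (yq (-b p.1) p.2) ^ 2 := by
  have hr := h.rpos p.1
  have hP := h.Ppos p.1
  have hy : yq (b p.1) (-p.2) = yq (-b p.1) p.2 := by unfold yq; ring
  unfold jac qf ang tmap damp
  rw [normSq_pt, neg_one_mul, hy]
  set P := 1 + b p.1 ^ 2 + b' p.1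
  have h1 := yq_pos (-b p.1) p.2
  have e1 : 0 < 1 + e * (r p.1 ^ 2 * yq (-b p.1) p.2) := by positivity
  have e3 : 0 < 1 + p.2 ^ 2 * P := by positivity
  rw [mul_assoc e]
  have k1 : 1 - -b p.1 * p.2 = yq (-b p.1) p.2 - ((1 + b p.1 ^ 2) * p.2 + b p.1) * p.2 := by
    unfold yq; ring
  rw [k1]
  unfold qform
  rw [hy]
  generalize yq (-b p.1) p.2 = Y1 at *
  generalize 1 + e * (r p.1 ^ 2 * Y1) = E1 at *
  field_simp
  ring

lemma exists_bounds (h : RadialData K r b b') : ∃ B M m : ℝ, 0 < m ∧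
    ∀ s ∈ Ico 0 (2 * π), |b s| ≤ B ∧ 1 + b s ^ 2 + b' s ≤ M ∧ m ≤ r s := by
  have hc : IsCompact (Icc 0 (2 * π)) := isCompact_Icc
  have c1 := h.contb; have c2 := h.hb'
  obtain ⟨B, hB⟩ := hc.exists_bound_of_continuousOn (f := b) h.contb.continuousOn
  obtain ⟨M, hM⟩ := hc.exists_bound_of_continuousOn (f := fun s => 1 + b s ^ 2 + b' s)
    (by fun_prop : Continuous fun s => 1 + b s ^ 2 + b' s).continuousOn
  obtain ⟨s₀, -, hs₀⟩ := hc.exists_isMinOn (nonempty_Icc.2 (by positivity)) h.contr.continuousOn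
  refine ⟨B, M, r s₀, h.rpos s₀, fun s hs => ⟨hB s (Ico_subset_Icc_self hs), ?_,
    hs₀ (Ico_subset_Icc_self hs)⟩⟩
  exact (le_abs_self _).trans (hM s (Ico_subset_Icc_self hs))

lemma measurable_dens (h : RadialData K r b b') (e : ℝ) : Measurable fun p : ℝ × ℝ =>
    dens (r p.1) (b p.1) (1 + b p.1 ^ 2 + b' p.1) e p.2 := by
  have c1 := h.contb.measurable; have c2 := h.hb'.measurable; have c3 := h.contr.measurable
  unfold dens damp yq
  fun_prop

/-- The averaged second variation, in the limit of vanishing damping. -/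
lemma integral_dens_nonneg (h : RadialData K r b b') (hT : IsOuterBilliard K T)
    (hS : IsGenFun K S) (hmin : AllOrbitsLocMin K T S) :
    IntegrableOn (fun p : ℝ × ℝ =>
      dens (r p.1) (b p.1) (1 + b p.1 ^ 2 + b' p.1) 0 p.2) dom ∧
    0 ≤ ∫ p in dom, dens (r p.1) (b p.1) (1 + b p.1 ^ 2 + b' p.1) 0 p.2 := by
  obtain ⟨B, M, m, hm, hbd⟩ := h.exists_bounds
  have c1 := h.contb.measurable; have c2 := h.hb'.measurable; have c3 := h.contr.measurable
  let C : ℝ := M * (8 * B ^ 2 * (2 + 2 * B ^ 2) ^ 2 + (2 + 2 * B ^ 2) ^ 3 +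
    8 * B * (1 + B) * (2 + 2 * B ^ 2) ^ 2) + 2 * (1 + M)
  have hint : ∀ e, 0 ≤ e → IntegrableOn (fun p : ℝ × ℝ =>
      dens (r p.1) (b p.1) (1 + b p.1 ^ 2 + b' p.1) e p.2) dom := by
    intro e he
    refine Integrable.mono' (integrableOn_dom_inv C) (h.measurable_dens e).aestronglyMeasurable
      ((ae_restrict_iff' measurableSet_dom).2 (Filter.Eventually.of_forall fun p hp => ?_))
    obtain ⟨hb1, hb2, -⟩ := hbd p.1 hp.1
    exact abs_dens_le he (h.Ppos _) hb2 hb1 (le_of_lt hp.2)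
  refine ⟨hint 0 le_rfl, ?_⟩
  have hn : ∀ n : ℕ, 0 ≤ ∫ p in dom,
      dens (r p.1) (b p.1) (1 + b p.1 ^ 2 + b' p.1) (1 / ((n:ℝ) + 1)) p.2 := by
    intro n
    have he : (0:ℝ) < 1 / ((n:ℝ) + 1) := by positivity
    set e : ℝ := 1 / ((n:ℝ) + 1)
    have := h.integral_nonneg_of_locMin hT hS hmin (ang e) ?_ ?_ ?_
    · simpa only [h.jac_qf he.le] using this
    · simp only [h.jac_qf_fst he.le]
      refine Integrable.mono' (integrableOn_dom_inv (M * (2 + (1 + B) * (2 + 2 * B ^ 2)) *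
        ((2 + 2 * B ^ 2) / (e * m ^ 2)))) (Measurable.aestronglyMeasurable ?_)
        ((ae_restrict_iff' measurableSet_dom).2 (Filter.Eventually.of_forall fun p hp => ?_))
      · unfold damp yq; fun_prop
      · obtain ⟨hb1, hb2, hb3⟩ := hbd p.1 hp.1
        exact abs_end_le he (h.Ppos _) hb2 hb1 hm hb3 (le_of_lt hp.2)
    · simp only [h.jac_qf he.le]
      exact hint e he.le
    · simp only [h.jac_qf_snd he.le]
      refine Integrable.mono' (integrableOn_dom_inv (M * (2 + (1 + B) * (2 + 2 * B ^ 2)) *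
        ((2 + 2 * B ^ 2) / (e * m ^ 2)))) (Measurable.aestronglyMeasurable ?_)
        ((ae_restrict_iff' measurableSet_dom).2 (Filter.Eventually.of_forall fun p hp => ?_))
      · unfold damp yq; fun_prop
      · obtain ⟨hb1, hb2, hb3⟩ := hbd p.1 hp.1
        exact abs_end_le he (h.Ppos _) hb2 (by rwa [abs_neg]) hm hb3 (le_of_lt hp.2)
  refine ge_of_tendsto' (x := Filter.atTop) (f := fun n : ℕ => ∫ p in dom,
      dens (r p.1) (b p.1) (1 + b p.1 ^ 2 + b' p.1) (1 / ((n:ℝ) + 1)) p.2) ?_ hn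
  refine tendsto_integral_of_dominated_convergence _
    (fun n => (h.measurable_dens _).aestronglyMeasurable) (integrableOn_dom_inv C)
    (fun n => (ae_restrict_iff' measurableSet_dom).2 (Filter.Eventually.of_forall fun p hp => ?_))
    (Filter.Eventually.of_forall fun p => tendsto_dens _ _ _ _)
  obtain ⟨hb1, hb2, -⟩ := hbd p.1 hp.1
  exact abs_dens_le (by positivity) (h.Ppos _) hb2 hb1 (le_of_lt hp.2)

end RadialData

lemma dens_zero (R β P t : ℝ) : dens R β P 0 t =
    P * (2 / (1 + P * t ^ 2) - (1 - β * t) / yq β t - (1 + β * t) / yq β (-t)) := by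
  unfold dens damp
  simp only [zero_mul, add_zero, div_one]
  have : (1 + 1 : ℝ) ^ 2 / (2 * (1 + P * t ^ 2)) = 2 / (1 + P * t ^ 2) := by
    rw [show ((1:ℝ) + 1) ^ 2 = 2 * 2 by norm_num, mul_div_mul_left _ _ two_ne_zero]
  rw [this]; ring

/-- An antiderivative of the term `(1 - β t) / yq β t`; it grows logarithmically, but the growth
cancels in the sum over `β` and `-β`. -/
lemma hasDerivAt_yq_aux (β t : ℝ) :
    HasDerivAt (fun t => -(β / 2) * log (yq β t) + arctan ((1 + β ^ 2) * t - β))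
      ((1 + β ^ 2) * ((1 - β * t) / yq β t)) t := by
  have hy := yq_pos β t
  have h1 : HasDerivAt (fun t => yq β t) (2 * t - 2 * β * (1 - β * t)) t := by
    unfold yq
    have := ((hasDerivAt_id t).pow 2).add ((((hasDerivAt_id t).const_mul β).const_sub 1).pow 2)
    refine HasDerivAt.congr_deriv this ?_
    simp
    ring
  have h2 : HasDerivAt (fun t => (1 + β ^ 2) * t - β) (1 + β ^ 2) t := by
    simpa using ((hasDerivAt_id t).const_mul (1 + β ^ 2)).sub_const β
  refine HasDerivAt.congr_deriv (((h1.log hy.ne').const_mul (-(β / 2))).add h2.arctan) ?_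
  have e : 1 + ((1 + β ^ 2) * t - β) ^ 2 = (1 + β ^ 2) * yq β t := by unfold yq; ring
  rw [e]
  have : 1 + β ^ 2 ≠ 0 := by positivity
  have := hy.ne'
  field_simp
  ring

lemma tendsto_log_yq (β : ℝ) :
    Filter.Tendsto (fun t => log (yq β t) - 2 * log t) Filter.atTop (nhds (log (1 + β ^ 2))) := by
  have h1 : Filter.Tendsto (fun t : ℝ => log (1 + (t⁻¹ - β) ^ 2)) Filter.atTop
      (nhds (log (1 + (0 - β) ^ 2))) := by
    have : Continuous fun x : ℝ => log (1 + (x - β) ^ 2) :=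
      Continuous.log (by fun_prop) fun x => by positivity
    exact (this.tendsto 0).comp tendsto_inv_atTop_zero
  rw [zero_sub, neg_sq] at h1
  refine h1.congr' ?_
  filter_upwards [Filter.eventually_gt_atTop 0] with t ht
  have e : yq β t = (1 + (t⁻¹ - β) ^ 2) * t ^ 2 := by unfold yq; field_simp
  rw [e, log_mul (by positivity) (by positivity), log_pow]
  push_cast
  ring

lemma tendsto_arctan_affine {a : ℝ} (ha : 0 < a) (c : ℝ) :
    Filter.Tendsto (fun t => arctan (a * t + c)) Filter.atTop (nhds (π / 2)) := by
  have h1 : Filter.Tendsto (fun t => a * t + c) Filter.atTop Filter.atTop :=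
    Filter.tendsto_atTop_add_const_right _ _ (Filter.tendsto_id.const_mul_atTop ha)
  exact (tendsto_arctan_atTop.mono_right nhdsWithin_le_nhds).comp h1

/-- The integral of the limiting density along one tangent line. -/
lemma integral_dens_zero {R β P : ℝ} (hP : 0 < P) :
    ∫ t in Ioi 0, dens R β P 0 t = π * √P - π * (P / (1 + β ^ 2)) := by
  have hβ : 0 < 1 + β ^ 2 := by positivity
  have hsq : √P * √P = P := mul_self_sqrt hP.le
  have hs : 0 < √P := sqrt_pos.2 hP
  set G : ℝ → ℝ := fun t => 2 * √P * arctan (√P * t) - P / (1 + β ^ 2) *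
    ((-(β / 2) * log (yq β t) + arctan ((1 + β ^ 2) * t - β)) +
      (-(-β / 2) * log (yq (-β) t) + arctan ((1 + (-β) ^ 2) * t - -β))) with hG
  have hder : ∀ t, HasDerivAt G (dens R β P 0 t) t := by
    intro t
    have h1 : HasDerivAt (fun t => √P * t) (√P) t := by
      simpa using (hasDerivAt_id t).const_mul (√P)
    refine HasDerivAt.congr_deriv ((h1.arctan.const_mul (2 * √P)).sub
      (((hasDerivAt_yq_aux β t).add (hasDerivAt_yq_aux (-β) t)).const_mul (P / (1 + β ^ 2)))) ?_
    have hy : yq β (-t) = yq (-β) t := by unfold yq; ring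
    have h0 := (yq_pos (-β) t).ne'
    have h1 := (yq_pos β t).ne'
    have h2 : 1 + P * t ^ 2 ≠ 0 := by positivity
    have e : (√P * t) ^ 2 = P * t ^ 2 := by rw [mul_pow, sq_sqrt hP.le]
    rw [dens_zero, hy, e, neg_sq]
    have e2 : 2 * √P * (1 / (1 + P * t ^ 2) * √P) = P * (2 / (1 + P * t ^ 2)) := by
      linear_combination (2 / (1 + P * t ^ 2)) * hsq
    rw [e2]
    field_simp
    ring
  have hint : IntegrableOn (fun t => dens R β P 0 t) (Ioi 0) := by
    refine Integrable.mono' (integrable_inv_one_add_sq.restrict.const_mul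
        (P * (8 * |β| ^ 2 * (2 + 2 * |β| ^ 2) ^ 2 + (2 + 2 * |β| ^ 2) ^ 3 +
          8 * |β| * (1 + |β|) * (2 + 2 * |β| ^ 2) ^ 2) + 2 * (1 + P)))
      (Measurable.aestronglyMeasurable ?_)
      ((ae_restrict_iff' measurableSet_Ioi).2 (Filter.Eventually.of_forall fun t ht => ?_))
    · unfold dens damp yq; fun_prop
    · exact abs_dens_le le_rfl hP le_rfl le_rfl (le_of_lt ht)
  have hlim : Filter.Tendsto G Filter.atTop (nhds (π * √P - π * (P / (1 + β ^ 2)))) := by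
    have t1 := tendsto_arctan_affine hs 0
    have t2 := tendsto_arctan_affine hβ (-β)
    have t3 := tendsto_arctan_affine hβ β
    have t4 := tendsto_log_yq β
    have t5 := tendsto_log_yq (-β)
    have := (t1.const_mul (2 * √P)).sub ((((t5.sub t4).const_mul (β / 2)).add
      (t2.add t3)).const_mul (P / (1 + β ^ 2)))
    refine (this.congr fun t => ?_).trans_eq ?_
    · simp only [hG, neg_sq, add_zero, sub_eq_add_neg, neg_neg]
      ring
    · congr 1
      rw [neg_sq]
      ring
  have h0 : G 0 = 0 := by simp [hG, yq]
  rw [integral_Ioi_of_hasDerivAt_of_tendsto (hder 0).continuousAt.continuousWithinAt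
    (fun t _ => hder t) hint hlim, h0, sub_zero]

namespace RadialData

variable {K : Set (ℝ × ℝ)} {r b b' : ℝ → ℝ} {S : ℝ → ℝ → ℝ} {T : ℝ × ℝ → ℝ × ℝ}

/-- Integrating the limiting density along the tangent lines gives `∫ (π √P - π P / (1 + b²)) ≥ 0`,
where `P = 1 + b² + b'`, and `P / (1 + b²)` is the derivative of the direction angle `s + arctan b`
of the normal, whose total increase is `2π`. -/
lemma integral_sqrt_ge (h : RadialData K r b b') (hT : IsOuterBilliard K T)
    (hS : IsGenFun K S) (hmin : AllOrbitsLocMin K T S) :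
    2 * π ≤ ∫ s in (0:ℝ)..(2 * π), √(1 + b s ^ 2 + b' s) := by
  obtain ⟨hi, hn⟩ := h.integral_dens_nonneg hT hS hmin
  have c1 := h.contb; have c2 := h.hb'
  unfold dom at hi hn
  rw [Measure.volume_eq_prod] at hi hn
  rw [setIntegral_prod _ hi] at hn
  simp only [integral_dens_zero (h.Ppos _)] at hn
  rw [integral_Ico_eq_integral_Ioc, ← intervalIntegral.integral_of_le (by positivity)] at hn
  have c3 : Continuous fun s => √(1 + b s ^ 2 + b' s) := by fun_prop
  have c4 : Continuous fun s => (1 + b s ^ 2 + b' s) / (1 + b s ^ 2) :=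
    Continuous.div (by fun_prop) (by fun_prop) fun s => by positivity
  rw [intervalIntegral.integral_sub ((c3.const_mul π).intervalIntegrable _ _)
    ((c4.const_mul π).intervalIntegrable _ _), intervalIntegral.integral_const_mul,
    intervalIntegral.integral_const_mul] at hn
  -- the last integral is the total angle swept, by periodicity of `arctan ∘ b`
  have e : ∫ s in (0:ℝ)..(2 * π), (1 + b s ^ 2 + b' s) / (1 + b s ^ 2) = 2 * π := by
    have hd : ∀ s, HasDerivAt (fun s => s + arctan (b s))
        ((1 + b s ^ 2 + b' s) / (1 + b s ^ 2)) s := by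
      intro s
      refine HasDerivAt.congr_deriv ((hasDerivAt_id s).add (h.hb s).arctan) ?_
      have : 1 + b s ^ 2 ≠ 0 := by positivity
      field_simp
    rw [intervalIntegral.integral_eq_sub_of_hasDerivAt (fun s _ => hd s)
      (c4.intervalIntegrable _ _)]
    have := h.bper 0
    rw [zero_add] at this
    rw [this]; ring
  rw [e, ← mul_sub] at hn
  have := nonneg_of_mul_nonneg_right hn pi_pos
  linarith

end RadialData

/-- If every orbit of the outer billiard map is locally minimizing, then
`∫₀^{2π} √χ / r dφ ≥ 2π`, where `r` is the radial function of `∂K` and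
`χ = r² + 2r′² − r r″`. -/
theorem outer_billiard_locally_minimizing_integral_lower_bound
    (K : Set (ℝ × ℝ)) (hconv : Convex ℝ K) (hcomp : IsCompact K)
    (hint : (interior K).Nonempty)
    (r : ℝ → ℝ) (hbd : HasC2PosCurvBoundary K 0 r)
    (T : ℝ × ℝ → ℝ × ℝ) (hT : IsOuterBilliard K T)
    (S : ℝ → ℝ → ℝ) (hS : IsGenFun K S)
    (hmin : AllOrbitsLocMin K T S) :
    2 * π ≤ ∫ φ in (0:ℝ)..(2 * π),
      Real.sqrt (r φ ^ 2 + 2 * (deriv r φ) ^ 2 - r φ * deriv (deriv r) φ) / r φ := by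
  -- radial data: `b = -r' / r` and its derivative
  obtain ⟨h0, hC2, hper, hpos, hχ, hfr⟩ := hbd
  have d1 : Differentiable ℝ r := hC2.differentiable (by norm_num)
  have d2 : Differentiable ℝ (deriv r) := hC2.differentiable_deriv_two
  have hC2' : ContDiff ℝ (1 + 1) r := by norm_num; exact hC2
  have hC1 : ContDiff ℝ 1 (deriv r) := (contDiff_succ_iff_deriv.1 hC2').2.2
  have c0 : Continuous r := d1.continuous
  have c1 : Continuous (deriv r) := d2.continuous
  have c2 : Continuous (deriv (deriv r)) := hC1.continuous_deriv le_rfl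
  have p1 : ∀ x, deriv r (x + 2 * π) = deriv r x := fun x => by
    rw [← deriv_comp_add_const, funext hper]
  have p2 : ∀ x, deriv (deriv r) (x + 2 * π) = deriv (deriv r) x := fun x => by
    rw [← deriv_comp_add_const, funext p1]
  have key : ∀ x, 1 + (-deriv r x / r x) ^ 2 +
      (-deriv (deriv r) x / r x + (deriv r x) ^ 2 / r x ^ 2) =
      (r x ^ 2 + 2 * (deriv r x) ^ 2 - r x * deriv (deriv r) x) / r x ^ 2 := fun x => by
    have := (hpos x).ne'
    field_simp
    ring
  have h : RadialData K r (fun x => -deriv r x / r x)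
      (fun x => -deriv (deriv r) x / r x + (deriv r x) ^ 2 / r x ^ 2) :=
    { conv := hconv
      comp := hcomp
      zero_mem := h0
      frontier_eq := by simpa only [zero_add] using hfr
      hr := fun x => by
        refine (d1 x).hasDerivAt.congr_deriv ?_
        have := (hpos x).ne'
        field_simp
      hb := fun x => by
        refine ((d2 x).hasDerivAt.neg.div (d1 x).hasDerivAt (hpos x).ne').congr_deriv ?_
        have := (hpos x).ne'
        simp only [Pi.neg_apply]
        field_simp
        ring
      hb' := (c2.neg.div c0 fun x => (hpos x).ne').add
        ((c1.pow 2).div (c0.pow 2) fun x => (pow_pos (hpos x) 2).ne')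
      rper := hper
      bper := fun x => by simp only [p1, hper]
      b'per := fun x => by simp only [p1, p2, hper]
      rpos := hpos
      Ppos := fun x => by rw [key]; exact div_pos (hχ x) (pow_pos (hpos x) 2) }
  refine (h.integral_sqrt_ge hT hS hmin).trans_eq (intervalIntegral.integral_congr fun x _ => ?_)
  simp only [key]
  rw [Real.sqrt_div (hχ x).le, Real.sqrt_sq (hpos x).le]
end
end

section
/- For all real numbers r > 0, c > 0 and v, the improper integral ∫₀^∞ [ c (t v − r) / ( r ( (1 + t²) r² − 2 t r v + t² v² ) ) − c (r + t v) / ( r ( (1 + t²) r² + 2 t r v + t² v² ) ) ] dt converges and equals −π c / (r² + v²). -/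
/-!
With `A = r² + v²` the two denominators are `r` times `D∓ = A t² ∓ 2 r v t + r²`, and
`A D∓ = (A t ∓ r v)² + r⁴`. Hence each summand has an elementary antiderivative and the whole
integrand has the antiderivative
`(c / r) * (v / (2A) * (log D₋ - log D₊)
  - (r / A) * (arctan ((A t - r v) / r²) + arctan ((A t + r v) / r²)))`.
It vanishes at `0`, and since `D₋ / D₊ → 1` it tends to `-π c / A` at infinity.

Each summand separately decays only like `1 / t` when `v ≠ 0`. Over a common denominator the
leading terms cancel and the integrand is `2 c ((v² - r²) t² - r²) / (D₋ D₊)`; as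
`D∓ ≥ r⁴ / (A + r²) * (1 + t²)`, it is dominated by a multiple of `1 / (1 + t²)`.
-/

open Real MeasureTheory Set

/-- The constant is the determinant of the quadratic form `A t² + 2 r w t s + r² s²`, where
`A = r² + w²`, divided by its trace, hence a lower bound for its least eigenvalue. -/
lemma quad_lower_bound (r w t : ℝ) (hr : 0 < r) :
    r ^ 4 / (2 * r ^ 2 + w ^ 2) * (1 + t ^ 2)
      ≤ (1 + t ^ 2) * r ^ 2 + 2 * t * r * w + t ^ 2 * w ^ 2 := by
  have hT : 0 < 2 * r ^ 2 + w ^ 2 := by positivity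
  rw [div_mul_eq_mul_div, div_le_iff₀ hT]
  -- By Cayley–Hamilton, `tr(M) M - det(M) = M²`, so the difference is `‖M (t, 1)‖²`.
  nlinarith [sq_nonneg ((r ^ 2 + w ^ 2) * t + r * w), sq_nonneg (r * w * t + r ^ 2)]

lemma quad_pos (r w t : ℝ) (hr : 0 < r) :
    0 < (1 + t ^ 2) * r ^ 2 + 2 * t * r * w + t ^ 2 * w ^ 2 :=
  lt_of_lt_of_le (by positivity) (quad_lower_bound r w t hr)

lemma hasDerivAt_log_quad (r w t : ℝ) (hr : 0 < r) :
    HasDerivAt (fun t : ℝ => Real.log ((1 + t ^ 2) * r ^ 2 + 2 * t * r * w + t ^ 2 * w ^ 2))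
      ((2 * (r ^ 2 + w ^ 2) * t + 2 * r * w) /
        ((1 + t ^ 2) * r ^ 2 + 2 * t * r * w + t ^ 2 * w ^ 2)) t := by
  refine HasDerivAt.log ?_ (quad_pos r w t hr).ne'
  have h2 : HasDerivAt (fun t : ℝ => t ^ 2) (2 * t) t := by simpa using hasDerivAt_pow 2 t
  have h := (((h2.const_add 1).mul_const (r ^ 2)).add
    ((((hasDerivAt_id t).const_mul 2).mul_const r).mul_const w)).add (h2.mul_const (w ^ 2))
  refine h.congr_deriv ?_
  ring

lemma hasDerivAt_arctan_quad (r w t : ℝ) (hr : 0 < r) :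
    HasDerivAt (fun t : ℝ => arctan (((r ^ 2 + w ^ 2) * t + r * w) / r ^ 2))
      (r ^ 2 / ((1 + t ^ 2) * r ^ 2 + 2 * t * r * w + t ^ 2 * w ^ 2)) t := by
  have h := ((((hasDerivAt_id t).const_mul (r ^ 2 + w ^ 2)).add_const (r * w)).div_const
    (r ^ 2)).arctan
  refine h.congr_deriv ?_
  have hD := (quad_pos r w t hr).ne'
  have hA : 0 < r ^ 2 + w ^ 2 := by positivity
  have h1 : 1 + (((r ^ 2 + w ^ 2) * t + r * w) / r ^ 2) ^ 2
      = (r ^ 2 + w ^ 2) * ((1 + t ^ 2) * r ^ 2 + 2 * t * r * w + t ^ 2 * w ^ 2) / r ^ 4 := by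
    field_simp
    ring
  simp only [id]
  rw [h1]
  field_simp

/-- Multiplied by `-(c / r)`, the derivative is the first summand of the integrand for `w = -v` and
the second one, with its sign, for `w = v`. -/
lemma hasDerivAt_summand (r w t : ℝ) (hr : 0 < r) :
    HasDerivAt (fun t : ℝ =>
        w / (2 * (r ^ 2 + w ^ 2))
            * Real.log ((1 + t ^ 2) * r ^ 2 + 2 * t * r * w + t ^ 2 * w ^ 2)
          + r / (r ^ 2 + w ^ 2) * arctan (((r ^ 2 + w ^ 2) * t + r * w) / r ^ 2))
      ((r + t * w) / ((1 + t ^ 2) * r ^ 2 + 2 * t * r * w + t ^ 2 * w ^ 2)) t := by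
  have hA : 0 < r ^ 2 + w ^ 2 := by positivity
  have hD := (quad_pos r w t hr).ne'
  refine (((hasDerivAt_log_quad r w t hr).const_mul (w / (2 * (r ^ 2 + w ^ 2)))).add
    ((hasDerivAt_arctan_quad r w t hr).const_mul (r / (r ^ 2 + w ^ 2)))).congr_deriv ?_
  rw [← mul_div_assoc, ← mul_div_assoc, ← add_div]
  congr 1
  field_simp
  ring

lemma tendsto_arctan_quad (r w : ℝ) (hr : 0 < r) :
    Filter.Tendsto (fun t : ℝ => arctan (((r ^ 2 + w ^ 2) * t + r * w) / r ^ 2))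
      Filter.atTop (nhds (π / 2)) := by
  refine (tendsto_arctan_atTop.mono_right nhdsWithin_le_nhds).comp ?_
  exact (Filter.tendsto_atTop_add_const_right _ _
    (Filter.tendsto_id.const_mul_atTop (by positivity))).atTop_div_const (by positivity)

lemma tendsto_log_quad_sub (r v : ℝ) (hr : 0 < r) :
    Filter.Tendsto (fun t : ℝ =>
        Real.log ((1 + t ^ 2) * r ^ 2 + 2 * t * r * (-v) + t ^ 2 * (-v) ^ 2)
          - Real.log ((1 + t ^ 2) * r ^ 2 + 2 * t * r * v + t ^ 2 * v ^ 2))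
      Filter.atTop (nhds 0) := by
  have hA : r ^ 2 + v ^ 2 ≠ 0 := by positivity
  -- The substitution `u = t⁻¹` turns the limit into continuity at `u = 0`.
  have hc : ContinuousAt (fun u : ℝ => Real.log
      (((r ^ 2 + v ^ 2) - 2 * r * v * u + r ^ 2 * u ^ 2) /
        ((r ^ 2 + v ^ 2) + 2 * r * v * u + r ^ 2 * u ^ 2))) 0 := by
    refine ContinuousAt.log (ContinuousAt.div (by fun_prop) (by fun_prop) ?_) ?_
    · simpa using hA
    · simp [hA]
  have h := hc.tendsto.comp tendsto_inv_atTop_zero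
  simp only [mul_zero, sub_zero, add_zero, ne_eq, OfNat.ofNat_ne_zero, not_false_eq_true,
    zero_pow, div_self hA, Real.log_one] at h
  refine h.congr' ?_
  filter_upwards [Filter.eventually_gt_atTop 0] with t ht
  have h1 := (quad_pos r (-v) t hr).ne'
  have h2 := (quad_pos r v t hr).ne'
  rw [← Real.log_div h1 h2, Function.comp]
  congr 1
  have e1 : (r ^ 2 + v ^ 2) - 2 * r * v * t⁻¹ + r ^ 2 * t⁻¹ ^ 2
      = ((1 + t ^ 2) * r ^ 2 + 2 * t * r * (-v) + t ^ 2 * (-v) ^ 2) / t ^ 2 := by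
    field_simp
    ring
  have e2 : (r ^ 2 + v ^ 2) + 2 * r * v * t⁻¹ + r ^ 2 * t⁻¹ ^ 2
      = ((1 + t ^ 2) * r ^ 2 + 2 * t * r * v + t ^ 2 * v ^ 2) / t ^ 2 := by
    field_simp
    ring
  rw [e1, e2, div_div_div_cancel_right₀ (by positivity)]

lemma integrand_eq (r c v t : ℝ) (hr : 0 < r) :
    c * (t * v - r) / (r * ((1 + t ^ 2) * r ^ 2 - 2 * t * r * v + t ^ 2 * v ^ 2))
        - c * (r + t * v) / (r * ((1 + t ^ 2) * r ^ 2 + 2 * t * r * v + t ^ 2 * v ^ 2))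
      = 2 * c * ((v ^ 2 - r ^ 2) * t ^ 2 - r ^ 2) /
        (((1 + t ^ 2) * r ^ 2 + 2 * t * r * (-v) + t ^ 2 * (-v) ^ 2)
          * ((1 + t ^ 2) * r ^ 2 + 2 * t * r * v + t ^ 2 * v ^ 2)) := by
  have h1 := (quad_pos r (-v) t hr).ne'
  have h2 := (quad_pos r v t hr).ne'
  have e : (1 + t ^ 2) * r ^ 2 - 2 * t * r * v + t ^ 2 * v ^ 2
      = (1 + t ^ 2) * r ^ 2 + 2 * t * r * (-v) + t ^ 2 * (-v) ^ 2 := by ring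
  rw [e, div_sub_div _ _ (mul_ne_zero hr.ne' h1) (mul_ne_zero hr.ne' h2),
    div_eq_div_iff (by positivity) (by positivity)]
  ring

lemma integrable_integrand (r c v : ℝ) (hr : 0 < r) (hc : 0 < c) :
    Integrable (fun t : ℝ =>
      c * (t * v - r) / (r * ((1 + t ^ 2) * r ^ 2 - 2 * t * r * v + t ^ 2 * v ^ 2))
        - c * (r + t * v) / (r * ((1 + t ^ 2) * r ^ 2 + 2 * t * r * v + t ^ 2 * v ^ 2))) := by
  set ε := r ^ 4 / (2 * r ^ 2 + v ^ 2) with hε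
  have hε0 : 0 < ε := by positivity
  refine (integrable_inv_one_add_sq.const_mul (2 * c * (r ^ 2 + v ^ 2) / ε ^ 2)).mono' ?_ ?_
  · exact Measurable.aestronglyMeasurable (by fun_prop)
  refine Filter.Eventually.of_forall fun t => ?_
  have h1 := quad_lower_bound r (-v) t hr
  have h2 := quad_lower_bound r v t hr
  rw [neg_sq v, ← hε, ← neg_sq v] at h1
  rw [← hε] at h2
  have hp1 := quad_pos r (-v) t hr
  have hp2 := quad_pos r v t hr
  rw [integrand_eq r c v t hr, Real.norm_eq_abs, abs_div, abs_mul,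
    abs_of_pos (mul_pos hp1 hp2), abs_of_pos (by positivity : 0 < 2 * c)]
  have hnum : |(v ^ 2 - r ^ 2) * t ^ 2 - r ^ 2| ≤ (r ^ 2 + v ^ 2) * (1 + t ^ 2) := by
    rw [abs_le]
    constructor <;> nlinarith [sq_nonneg v, sq_nonneg r, sq_nonneg (v * t), sq_nonneg (r * t)]
  calc _ ≤ 2 * c * ((r ^ 2 + v ^ 2) * (1 + t ^ 2)) / ((ε * (1 + t ^ 2)) * (ε * (1 + t ^ 2))) := by
        gcongr
    _ = _ := by
        field_simp

/-- The improper integral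
`∫₀^∞ [c(tv − r)/(r((1+t²)r² − 2trv + t²v²)) − c(r + tv)/(r((1+t²)r² + 2trv + t²v²))] dt`
converges and equals `−πc/(r² + v²)`. -/
theorem improper_integral_F2_plus_F3
    (r c v : ℝ) (hr : 0 < r) (hc : 0 < c) :
    IntegrableOn (fun t : ℝ =>
        c * (t * v - r) / (r * ((1 + t ^ 2) * r ^ 2 - 2 * t * r * v + t ^ 2 * v ^ 2))
          - c * (r + t * v) / (r * ((1 + t ^ 2) * r ^ 2 + 2 * t * r * v + t ^ 2 * v ^ 2)))
      (Ioi 0) volume ∧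
    ∫ t in Ioi (0 : ℝ),
        (c * (t * v - r) / (r * ((1 + t ^ 2) * r ^ 2 - 2 * t * r * v + t ^ 2 * v ^ 2))
          - c * (r + t * v) / (r * ((1 + t ^ 2) * r ^ 2 + 2 * t * r * v + t ^ 2 * v ^ 2)))
      = -(π * c) / (r ^ 2 + v ^ 2) := by
  have hint := (integrable_integrand r c v hr hc).integrableOn (s := Ioi 0)
  refine ⟨hint, ?_⟩
  have hA : 0 < r ^ 2 + v ^ 2 := by positivity
  have hderiv := fun t : ℝ =>
    ((hasDerivAt_summand r (-v) t hr).add (hasDerivAt_summand r v t hr)).const_mul (-(c / r))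
  have hlim := ((((tendsto_log_quad_sub r v hr).const_mul (-v / (2 * (r ^ 2 + v ^ 2)))).add
    (((tendsto_arctan_quad r (-v) hr).add (tendsto_arctan_quad r v hr)).const_mul
      (r / (r ^ 2 + v ^ 2)))).const_mul (-(c / r)))
  rw [integral_Ioi_of_hasDerivAt_of_tendsto' (fun t _ => (hderiv t).congr_deriv ?_) hint
    (hlim.congr fun t => ?_)]
  · have e : (r ^ 2 + v ^ 2) * 0 + r * -v = -((r ^ 2 + v ^ 2) * 0 + r * v) := by ring
    simp only [Pi.add_apply, neg_sq, e, neg_div, arctan_neg]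
    norm_num
    field_simp
    ring
  · have h1 := (quad_pos r (-v) t hr).ne'
    have h2 := (quad_pos r v t hr).ne'
    have e : (1 + t ^ 2) * r ^ 2 - 2 * t * r * v + t ^ 2 * v ^ 2
        = (1 + t ^ 2) * r ^ 2 + 2 * t * r * (-v) + t ^ 2 * (-v) ^ 2 := by ring
    rw [e]
    generalize (1 + t ^ 2) * r ^ 2 + 2 * t * r * (-v) + t ^ 2 * (-v) ^ 2 = D₁ at *
    generalize (1 + t ^ 2) * r ^ 2 + 2 * t * r * v + t ^ 2 * v ^ 2 = D₂ at *
    field_simp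
    ring
  · simp only [Pi.add_apply, neg_sq]
    ring
end
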